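/- arXiv:math/0610022 — 3 statements merged into one kernel-verified Lean document; each statement's English description precedes it below -/
import Mathlib

section
/- The total number, summed over all n with 4 ≤ n ≤ 100, of isomorphism classes of equivelar combinatorial surfaces on Fin n that are orientable with Euler characteristic 0 (equivelar triangulations of the torus) is exactly 1357, and the total number of isomorphism classes of equivelar combinatorial surfaces on Fin n with 4 ≤ n ≤ 100 that are non-orientable with Euler characteristic 0 (equivelar triangulations of the Klein bottle) is exactly 364. -/
open Finset

section Defs

variable {α : Type*} [DecidableEq α]

/-- The 1-skeleton graph of a set of faces: two vertices are adjacent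
if they lie together in a common face of `S`. -/
def skeletonGraph (S : Finset (Finset α)) : SimpleGraph α where
  Adj a b := a ≠ b ∧ ∃ T ∈ S, a ∈ T ∧ b ∈ T
  symm := by
    constructor
    rintro a b ⟨hab, T, hT, ha, hb⟩
    exact ⟨hab.symm, T, hT, hb, ha⟩
  loopless := by constructor; rintro a ⟨h, -⟩; exact h rfl

/-- The link graph of a vertex `v`: `a` and `b` are adjacent
if `{v, a, b}` is a triangle of `S`. -/
def linkGraph (S : Finset (Finset α)) (v : α) : SimpleGraph α where
  Adj a b := a ≠ b ∧ ({v, a, b} : Finset α) ∈ S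
  symm := by
    constructor
    rintro a b ⟨hab, h⟩
    refine ⟨hab.symm, ?_⟩
    rwa [Finset.pair_comm b a]
  loopless := by constructor; rintro a ⟨h, -⟩; exact h rfl

/-- The set of neighbors of the vertex `v` in `S`. -/
def nbrSet (S : Finset (Finset α)) (v : α) : Set α :=
  {a | a ≠ v ∧ ∃ T ∈ S, v ∈ T ∧ a ∈ T}

/-- The edges of `S`: the 2-element subsets of `V` contained in some face of `S`. -/
def edgesOn (V : Finset α) (S : Finset (Finset α)) : Finset (Finset α) :=
  V.powerset.filter fun e => e.card = 2 ∧ ∃ T ∈ S, e ⊆ T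

/-- `S` is a combinatorial surface on the vertex set `V`: all faces are triangles
on `V`, every vertex of `V` lies in a triangle, every edge lies in exactly two
triangles, the link graph of every vertex (induced on the neighbors of the
vertex) is connected, and the 1-skeleton (induced on `V`) is connected. -/
def IsCombSurfaceOn (V : Finset α) (S : Finset (Finset α)) : Prop :=
  (∀ T ∈ S, T.card = 3 ∧ T ⊆ V) ∧
  (∀ v ∈ V, ∃ T ∈ S, v ∈ T) ∧
  (∀ e : Finset α, e.card = 2 → (∃ T ∈ S, e ⊆ T) →
    (S.filter fun T => e ⊆ T).card = 2) ∧
  (∀ v ∈ V, ((linkGraph S v).induce (nbrSet S v)).Connected) ∧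
  ((skeletonGraph S).induce (V : Set α)).Connected

/-- The Euler characteristic `χ = |V| - f₁ + f₂` of `S` on the vertex set `V`. -/
def eulerCharOn (V : Finset α) (S : Finset (Finset α)) : ℤ :=
  (V.card : ℤ) - ((edgesOn V S).card : ℤ) + (S.card : ℤ)

/-- `S` is equivelar (degree-regular): all vertices of `V` lie in the same
number `q` of triangles. -/
def IsEquivelarOn (V : Finset α) (S : Finset (Finset α)) : Prop :=
  ∃ q : ℕ, ∀ v ∈ V, (S.filter fun T => v ∈ T).card = q

/-- The directed edges of the cyclic ordering given by an ordered triple. -/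
def dirEdges (t : α × α × α) : Finset (α × α) :=
  {(t.1, t.2.1), (t.2.1, t.2.2), (t.2.2, t.1)}

/-- `S` is orientable: one can choose a cyclic ordering of each triangle so that
for every edge `{a, b}` lying in two triangles, the two chosen cyclic orderings
traverse the edge in opposite directions. -/
def IsOrientable (S : Finset (Finset α)) : Prop :=
  ∃ o : Finset α → α × α × α,
    (∀ T ∈ S, ({(o T).1, (o T).2.1, (o T).2.2} : Finset α) = T) ∧
    (∀ T ∈ S, ∀ T' ∈ S, T ≠ T' → ∀ x y : α,
      (x, y) ∈ dirEdges (o T) → ({x, y} : Finset α) ⊆ T' →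
      (y, x) ∈ dirEdges (o T'))

/-- The link of a vertex `v` in a 3-dimensional complex `S`:
the triangles `{a,b,c}` with `{v,a,b,c} ∈ S`. -/
def linkOf (S : Finset (Finset α)) (v : α) : Finset (Finset α) :=
  (S.filter fun T => v ∈ T).image fun T => T.erase v

end Defs

/-- `S` is a combinatorial surface on the vertex set `Fin n`. -/
def IsCombSurface (n : ℕ) (S : Finset (Finset (Fin n))) : Prop :=
  IsCombSurfaceOn Finset.univ S

/-- The Euler characteristic of a complex on the vertex set `Fin n`. -/
def eulerChar (n : ℕ) (S : Finset (Finset (Fin n))) : ℤ :=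
  eulerCharOn Finset.univ S

/-- `S` is equivelar on `Fin n`. -/
def IsEquivelar (n : ℕ) (S : Finset (Finset (Fin n))) : Prop :=
  IsEquivelarOn Finset.univ S

/-- `S` is neighborly: every 2-element subset of `Fin n` is an edge. -/
def IsNeighborly (n : ℕ) (S : Finset (Finset (Fin n))) : Prop :=
  ∀ e : Finset (Fin n), e.card = 2 → ∃ T ∈ S, e ⊆ T

/-- Two labeled complexes on `Fin n` are isomorphic if a permutation of the
vertices maps the faces of one onto the faces of the other. -/
def IsoComplex (n : ℕ) (S S' : Finset (Finset (Fin n))) : Prop :=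
  ∃ σ : Equiv.Perm (Fin n), S.image (fun T => T.image σ) = S'

/-- The number of isomorphism classes (orbits under the symmetric group)
of complexes on `Fin n` satisfying `P`. -/
noncomputable def numClasses (n : ℕ) (P : Finset (Finset (Fin n)) → Prop) : ℕ :=
  Nat.card (Quot fun A B : {S : Finset (Finset (Fin n)) // P S} => IsoComplex n A.1 B.1)

/-- The neighbors of a vertex `v` in a complex `S` on `Fin n`. -/
def vertexNbrs (n : ℕ) (S : Finset (Finset (Fin n))) (v : Fin n) : Finset (Fin n) :=
  Finset.univ.filter fun a => a ≠ v ∧ ∃ T ∈ S, v ∈ T ∧ a ∈ T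

/-- `S` is a combinatorial 3-manifold on the vertex set `Fin n`: all faces are
tetrahedra, every vertex lies in a tetrahedron, every triangle contained in a
tetrahedron lies in exactly two tetrahedra, the link of every vertex is a
combinatorial surface (on the neighbors of the vertex) with Euler
characteristic 2, and the 1-skeleton is connected. -/
def IsComb3Manifold (n : ℕ) (S : Finset (Finset (Fin n))) : Prop :=
  (∀ T ∈ S, T.card = 4) ∧
  (∀ v : Fin n, ∃ T ∈ S, v ∈ T) ∧
  (∀ F : Finset (Fin n), F.card = 3 → (∃ T ∈ S, F ⊆ T) →
    (S.filter fun T => F ⊆ T).card = 2) ∧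
  (∀ v : Fin n, IsCombSurfaceOn (vertexNbrs n S v) (linkOf S v) ∧
    eulerCharOn (vertexNbrs n S v) (linkOf S v) = 2) ∧
  (skeletonGraph S).Connected

/-!
Euler characteristic zero forces every vertex of an equivelar surface to have degree six. The group
generated by the rotation around a vertex and the half-turn around an edge then unfolds the surface
to the triangular lattice, so the surface is the quotient of the lattice by a group of symmetries
acting freely, and two surfaces are isomorphic exactly when their groups are conjugate.

The surface is orientable if and only if its group consists of translations. The tori are thus the
orbits of the dihedral point group on the sublattices of index `n` that separate the vertices of
every star. Each sublattice has a unique Hermite normal form, and weighting every such form by the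
order of its stabilizer counts the orbits.

For a Klein bottle the group is generated by translations along and across the axis of a glide
reflection and by a glide of half the axial period. There are two kinds of axes, told apart by a
sign `s`; together with the axial period `c` and the width `d` of the lattice, this sign is a
complete invariant, and `n = c * d`.
-/

/-! ### The triangular lattice and its point group -/

/-- The six unit vectors of the triangular lattice, in counterclockwise order, in the coordinates
with respect to two of them that enclose an angle of 60 degrees. -/
def hexDir (i : ZMod 6) : ℤ × ℤ :=
  (![(1, 0), (0, 1), (-1, 1), (-1, 0), (0, -1), (1, -1)] : Fin 6 → ℤ × ℤ) i

lemma hexDir_add_hexDir : ∀ i, hexDir i + hexDir (i + 2) = hexDir (i + 1) := by decide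

lemma hexDir_add_three : ∀ i, hexDir (i + 3) = -hexDir i := by decide

lemma hexDir_injective : Function.Injective hexDir := by unfold Function.Injective; decide

lemma eq_smul_hexDir_add (z : ℤ × ℤ) : z = z.1 • hexDir 0 + z.2 • hexDir 1 := by
  ext <;> simp [hexDir]

/-- The dihedral group permutes the six directions. -/
instance dihedralActionOnDirections : MulAction (DihedralGroup 6) (ZMod 6) where
  smul
    | .r i, j => j + i
    | .sr i, j => -j - i
  one_smul := by decide
  mul_smul := by decide

lemma r_smul_direction (i j : ZMod 6) : DihedralGroup.r i • j = j + i := rfl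

lemma sr_smul_direction (i j : ZMod 6) : DihedralGroup.sr i • j = -j - i := rfl

lemma smul_direction_add_one : ∀ (g : DihedralGroup 6) (j : ZMod 6),
    g • (j + 1) = g • j + 1 ∨ g • j = g • (j + 1) + 1 := by
  decide

lemma smul_direction_add_two : ∀ (g : DihedralGroup 6) (j : ZMod 6),
    g • (j + 2) = g • j + 2 ∨ g • j = g • (j + 2) + 2 := by
  decide

/-- The linear extension to the lattice of the permutation action on the six directions. -/
instance dihedralLatticeSMul : SMul (DihedralGroup 6) (ℤ × ℤ) where
  smul g z := z.1 • hexDir (g • 0) + z.2 • hexDir (g • 1)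

lemma smul_lattice_def (g : DihedralGroup 6) (z : ℤ × ℤ) :
    g • z = z.1 • hexDir (g • 0) + z.2 • hexDir (g • 1) := rfl

lemma smul_hexDir : ∀ (g : DihedralGroup 6) (i : ZMod 6), g • hexDir i = hexDir (g • i) := by
  decide

/-- The point group of the triangular lattice. -/
instance dihedralLatticeAction : DistribMulAction (DihedralGroup 6) (ℤ × ℤ) where
  one_smul z := (eq_smul_hexDir_add z).symm
  smul_zero g := by simp [smul_lattice_def]
  smul_add g z w := by
    simp only [smul_lattice_def, Prod.fst_add, Prod.snd_add, add_smul]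
    abel
  mul_smul g g' z := by
    have comp : ∀ i : ZMod 6, g • hexDir (g' • i) = hexDir ((g * g') • i) := fun i => by
      rw [smul_hexDir, mul_smul]
    rw [smul_lattice_def g' z, smul_lattice_def (g * g') z, ← comp, ← comp]
    simp only [smul_lattice_def, Prod.fst_add, Prod.snd_add, Prod.smul_fst, Prod.smul_snd,
      add_smul, smul_add, smul_smul, smul_eq_mul]
    abel

lemma hexDir_induction {P : ℤ × ℤ → Prop} (zero : P 0) (step : ∀ z i, P z → P (z + hexDir i))
    (z : ℤ × ℤ) : P z := by
  have step' (v : ℤ × ℤ) (i : ZMod 6) (hi : hexDir i = v) (z : ℤ × ℤ) (hz : P z) : P (z + v) :=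
    hi ▸ step z i hz
  have horizontal (m : ℤ) : P (m, 0) := by
    induction m using Int.induction_on with
    | zero => exact zero
    | succ k ih => simpa using step' (1, 0) 0 rfl _ ih
    | pred k ih => simpa [sub_eq_add_neg] using step' (-1, 0) 3 rfl _ ih
  obtain ⟨m, k⟩ := z
  induction k using Int.induction_on with
  | zero => exact horizontal m
  | succ k ih => simpa using step' (0, 1) 1 rfl _ ih
  | pred k ih => simpa [sub_eq_add_neg] using step' (0, -1) 4 rfl _ ih

lemma cyclic_induction {n : ℕ} [NeZero n] {P : ZMod n → Prop} {i : ZMod n} (base : P i)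
    (step : ∀ j, P j → P (j + 1)) (j : ZMod n) : P j := by
  have forward (k : ℕ) : P (i + k) := by
    induction k with
    | zero => simpa using base
    | succ k ih => simpa [add_assoc] using step _ ih
  simpa using forward (j - i).val

/-! ### Surfaces of degree six -/

section Surface

variable {V : Type*} [DecidableEq V] {S : Finset (Finset V)} {v x y z w : V}

/-- A connected surface all of whose vertices have degree six, on an arbitrary vertex type. -/
structure IsHexSurface (S : Finset (Finset V)) : Prop where
  card_eq_three : ∀ T ∈ S, T.card = 3
  card_edge : ∀ e : Finset V, e.card = 2 → (∃ T ∈ S, e ⊆ T) → (S.filter fun T => e ⊆ T).card = 2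
  link_connected : ∀ v, ((linkGraph S v).induce (nbrSet S v)).Connected
  connected : (skeletonGraph S).Connected
  degree : ∀ v, (S.filter fun T => v ∈ T).card = 6

lemma card_edgesOn_mul_two [Fintype V] (card_eq_three : ∀ T ∈ S, T.card = 3)
    (card_edge : ∀ e : Finset V, e.card = 2 → (∃ T ∈ S, e ⊆ T) →
      (S.filter fun T => e ⊆ T).card = 2) :
    (edgesOn univ S).card * 2 = S.card * 3 := by
  refine card_mul_eq_card_mul (fun e T => e ⊆ T) (fun e he => ?_) fun T hT => ?_
  · simp only [edgesOn, mem_filter] at he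
    exact card_edge e he.2.1 he.2.2
  · have : bipartiteBelow (fun e T => e ⊆ T) (edgesOn univ S) T = T.powersetCard 2 := by
      ext e
      simp only [bipartiteBelow, edgesOn, mem_filter, mem_powersetCard, mem_powerset,
        subset_univ, true_and]
      exact ⟨fun h => ⟨h.2, h.1.1⟩, fun h => ⟨⟨h.2, T, hT, h.1⟩, h.1⟩⟩
    rw [this, card_powersetCard, card_eq_three T hT]
    rfl

lemma card_mul_degree_eq [Fintype V] {q : ℕ} (card_eq_three : ∀ T ∈ S, T.card = 3)
    (degree : ∀ v, (S.filter fun T => v ∈ T).card = q) : Fintype.card V * q = S.card * 3 := by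
  rw [← sum_card degree, sum_congr rfl card_eq_three, sum_const, smul_eq_mul]

lemma connected_induce_univ_iff {W : Type*} [Fintype W] (G : SimpleGraph W) :
    (G.induce ((univ : Finset W) : Set W)).Connected ↔ G.Connected := by
  rw [coe_univ]
  exact (SimpleGraph.induceUnivIso G).connected_iff

lemma isHexSurface_iff {n : ℕ} {S : Finset (Finset (Fin n))} :
    IsHexSurface S ↔ IsCombSurface n S ∧ IsEquivelar n S ∧ eulerChar n S = 0 := by
  constructor
  · intro h
    have edges := card_edgesOn_mul_two h.card_eq_three h.card_edge
    have incidences := card_mul_degree_eq h.card_eq_three h.degree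
    refine ⟨⟨fun T hT => ⟨h.card_eq_three T hT, subset_univ _⟩, fun v _ => ?_, h.card_edge,
      fun v _ => h.link_connected v, (connected_induce_univ_iff _).2 h.connected⟩,
      ⟨6, fun v _ => h.degree v⟩, ?_⟩
    · obtain ⟨T, hT⟩ : (S.filter fun T => v ∈ T).Nonempty := by
        rw [← card_pos, h.degree]
        norm_num
      exact ⟨T, mem_filter.1 hT⟩
    · rw [Fintype.card_fin] at incidences
      simp only [eulerChar, eulerCharOn, card_univ, Fintype.card_fin]
      omega
  · rintro ⟨⟨triangles, -, card_edge, link_connected, connected⟩, ⟨q, hq⟩, euler⟩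
    have card_eq_three : ∀ T ∈ S, T.card = 3 := fun T hT => (triangles T hT).1
    have edges := card_edgesOn_mul_two card_eq_three card_edge
    have incidences := card_mul_degree_eq card_eq_three fun v => hq v (mem_univ v)
    rw [Fintype.card_fin] at incidences
    have connected := (connected_induce_univ_iff _).1 connected
    obtain rfl : q = 6 := by
      obtain ⟨v⟩ := connected.nonempty
      simp only [eulerChar, eulerCharOn, card_univ, Fintype.card_fin] at euler
      exact Nat.eq_of_mul_eq_mul_left v.pos (by omega : n * q = n * 6)
    exact ⟨card_eq_three, card_edge, fun v => link_connected v (mem_univ v), connected,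
      fun v => hq v (mem_univ v)⟩

/-- `x`, `y`, `z` are the vertices of a triangle of `S`. -/
def IsTri (S : Finset (Finset V)) (x y z : V) : Prop := ({x, y, z} : Finset V) ∈ S

lemma IsTri.swap_left (h : IsTri S x y z) : IsTri S y x z := by
  rwa [IsTri, Finset.insert_comm]

lemma IsTri.swap_right (h : IsTri S x y z) : IsTri S x z y := by
  rwa [IsTri, Finset.pair_comm]

lemma IsTri.rotate (h : IsTri S x y z) : IsTri S y z x := h.swap_left.swap_right

lemma exists_eq_triple {T : Finset V} (hT : T.card = 3) (hx : x ∈ T) (hy : y ∈ T) (hxy : x ≠ y) :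
    ∃ w, T = {x, y, w} := by
  have hyx : y ∈ T.erase x := mem_erase.2 ⟨hxy.symm, hy⟩
  obtain ⟨w, hw⟩ : ∃ w, (T.erase x).erase y = {w} := card_eq_one.1 <| by
    rw [card_erase_of_mem hyx, card_erase_of_mem hx, hT]
  exact ⟨w, by rw [← hw, insert_erase hyx, insert_erase hx]⟩

lemma eq_of_triple_eq (hx : x ≠ z) (hy : y ≠ z) (h : ({x, y, z} : Finset V) = {x, y, w}) :
    z = w := by
  have : z ∈ ({x, y, w} : Finset V) := h ▸ by simp
  simpa [hx.symm, hy.symm] using this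

namespace IsHexSurface

variable (hS : IsHexSurface S)
include hS

lemma ne_of_isTri (h : IsTri S x y z) : x ≠ y := by
  rintro rfl
  have := hS.card_eq_three _ h
  have := card_le_two (a := x) (b := z)
  rw [insert_eq_of_mem (mem_insert_self x _)] at *
  omega

lemma ne_of_isTri_right (h : IsTri S x y z) : y ≠ z := hS.ne_of_isTri h.rotate

lemma ne_of_isTri_outer (h : IsTri S x y z) : x ≠ z := hS.ne_of_isTri h.swap_right

lemma existsUnique_opposite (h : IsTri S x y z) : ∃! w, w ≠ z ∧ IsTri S x y w := by
  have hxy := hS.ne_of_isTri h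
  have edge_subset (w : V) : ({x, y} : Finset V) ⊆ {x, y, w} := by grind
  obtain ⟨T, hT⟩ : ∃ T, (S.filter fun T => {x, y} ⊆ T).erase {x, y, z} = {T} :=
    card_eq_one.1 <| by
      rw [card_erase_of_mem (mem_filter.2 ⟨h, edge_subset z⟩),
        hS.card_edge _ (card_pair hxy) ⟨_, h, edge_subset z⟩]
  have mem_T {U : Finset V} : (U ≠ {x, y, z} ∧ U ∈ S ∧ {x, y} ⊆ U) ↔ U = T := by
    rw [← mem_singleton, ← hT, mem_erase, mem_filter]
  obtain ⟨hTz, hTS, hxyT⟩ := mem_T.2 rfl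
  obtain ⟨w, rfl⟩ := exists_eq_triple (hS.card_eq_three T hTS) (hxyT (mem_insert_self x _))
    (hxyT (mem_insert_of_mem (mem_singleton_self y))) hxy
  refine ⟨w, ⟨by rintro rfl; exact hTz rfl, hTS⟩, fun u ⟨huz, hu⟩ => ?_⟩
  have hxu := hS.ne_of_isTri_outer hu
  have hyu := hS.ne_of_isTri_right hu
  exact eq_of_triple_eq hxu hyu (mem_T.1 ⟨fun he => huz (eq_of_triple_eq hxu hyu he), hu,
    edge_subset u⟩)

lemma opposite_unique (h : IsTri S x y z) {u : V} (hw : IsTri S x y w) (hu : IsTri S x y u)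
    (hwz : w ≠ z) (huz : u ≠ z) : w = u :=
  (hS.existsUnique_opposite h).unique ⟨hwz, hw⟩ ⟨huz, hu⟩

lemma mem_nbrSet_iff : x ∈ nbrSet S v ↔ ∃ y, IsTri S v x y := by
  constructor
  · rintro ⟨hne, T, hT, hv, hx⟩
    obtain ⟨w, rfl⟩ := exists_eq_triple (hS.card_eq_three T hT) hv hx hne.symm
    exact ⟨w, hT⟩
  · rintro ⟨y, hy⟩
    exact ⟨(hS.ne_of_isTri hy).symm, _, hy, by simp, by simp⟩

lemma ncard_nbrSet (v : V) : (nbrSet S v).ncard = 6 := by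
  set N := ((S.filter fun T => v ∈ T).biUnion id).erase v
  have mem_N {a : V} : a ∈ N ↔ a ≠ v ∧ ∃ T ∈ S, v ∈ T ∧ a ∈ T := by
    simp [N, and_assoc]
  have coe_N : (N : Set V) = nbrSet S v := Set.ext fun a => mem_N
  have double_count := card_mul_eq_card_mul (s := N) (t := S.filter fun T => v ∈ T)
    (m := 2) (n := 2) (fun a T => a ∈ T) (fun a ha => ?_) fun T hT => ?_
  · rw [hS.degree] at double_count
    rw [← coe_N, Set.ncard_coe_finset]
    omega
  · obtain ⟨hne, T, hT, hvT, haT⟩ := mem_N.1 ha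
    rw [← hS.card_edge {v, a} (card_pair hne.symm) ⟨T, hT, by grind⟩]
    congr 1
    ext T'
    simp only [bipartiteAbove, mem_filter, insert_subset_iff, singleton_subset_iff, and_assoc]
  · obtain ⟨hTS, hvT⟩ := mem_filter.1 hT
    have : bipartiteBelow (fun a T => a ∈ T) N T = T.erase v := by
      ext a
      simp only [bipartiteBelow, mem_filter, mem_N, mem_erase]
      exact ⟨fun h => ⟨h.1.1, h.2⟩, fun h => ⟨⟨h.1, T, hTS, hvT, h.2⟩, h.2⟩⟩
    rw [this, card_erase_of_mem hvT, hS.card_eq_three T hTS]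

end IsHexSurface

lemma mem_of_reachable {W : Type*} {G : SimpleGraph W} {R : Set W} {a b : W}
    (closed : ∀ a b, G.Adj a b → a ∈ R → b ∈ R) (h : G.Reachable a b) (ha : a ∈ R) : b ∈ R := by
  obtain ⟨p⟩ := h
  induction p with
  | nil => exact ha
  | cons hadj _ ih => exact ih (closed _ _ hadj ha)

namespace IsHexSurface

variable (hS : IsHexSurface S)
include hS

lemma mem_of_link_closed {R : Set V} (hx : x ∈ R) (hx' : ∃ b, IsTri S v x b)
    (closed : ∀ a b, a ∈ R → IsTri S v a b → b ∈ R) (hy : ∃ b, IsTri S v y b) : y ∈ R :=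
  mem_of_reachable (G := (linkGraph S v).induce (nbrSet S v)) (R := {a | (a : V) ∈ R})
    (fun _ _ hab ha => closed _ _ ha hab.2)
    ((hS.link_connected v).preconnected ⟨x, hS.mem_nbrSet_iff.2 hx'⟩ ⟨y, hS.mem_nbrSet_iff.2 hy⟩)
    hx

lemma mem_of_skeleton_closed {R : Set V} (hx : x ∈ R)
    (closed : ∀ a b c, a ∈ R → IsTri S a b c → b ∈ R) (y : V) : y ∈ R := by
  refine mem_of_reachable (fun a b hab ha => ?_) (hS.connected.preconnected x y) hx
  obtain ⟨hne, T, hT, haT, hbT⟩ := hab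
  obtain ⟨w, rfl⟩ := exists_eq_triple (hS.card_eq_three T hT) haT hbT hne
  exact closed a b w ha hT

end IsHexSurface

end Surface

/-! ### Vertex links are hexagons -/

lemma ncard_range_eq_index {A X : Type*} [AddCommGroup A] {L : AddSubgroup A} {f : A → X}
    (hf : ∀ a b, f a = f b ↔ a - b ∈ L) : (Set.range f).ncard = L.index := by
  rw [← Nat.card_coe_set_eq]
  refine Nat.card_congr ((Setoid.quotientKerEquivRange f).symm.trans
    (Quotient.congrRight fun a b => ?_))
  rw [QuotientAddGroup.leftRel_apply, Setoid.ker_def, eq_comm, hf, neg_add_eq_sub]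

section LinkWalk

variable {V : Type*} [DecidableEq V] {S : Finset (Finset V)} {v : V} {x : ℤ → V}

/-- A bi-infinite walk along the link of `v` that never turns back. -/
structure IsLinkWalk (S : Finset (Finset V)) (v : V) (x : ℤ → V) : Prop where
  isTri : ∀ i, IsTri S v (x i) (x (i + 1))
  ne_add_two : ∀ i, x i ≠ x (i + 2)

namespace IsLinkWalk

lemma reverse (hx : IsLinkWalk S v x) : IsLinkWalk S v fun i => x (-i) where
  isTri i := by simpa using (hx.isTri (-(i + 1))).swap_right
  ne_add_two i := by simpa using (hx.ne_add_two (-(i + 2))).symm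

variable (hS : IsHexSurface S) (hx : IsLinkWalk S v x)
include hS hx

lemma eq_pred_or_eq_succ {i : ℤ} {w : V} (hw : IsTri S v (x i) w) :
    w = x (i - 1) ∨ w = x (i + 1) := by
  have tri : IsTri S v (x i) (x (i - 1)) := by simpa using (hx.isTri (i - 1)).swap_right
  have ne : x (i + 1) ≠ x (i - 1) := by
    have := (hx.ne_add_two (i - 1)).symm
    rwa [show i - 1 + 2 = i + 1 by ring] at this
  by_contra! h
  exact h.2 (hS.opposite_unique tri hw (hx.isTri i) h.1 ne)

lemma not_reversed (k : ℕ) : ∀ i, ¬ (x i = x (i + k + 1) ∧ x (i + 1) = x (i + k)) := by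
  induction k using Nat.twoStepInduction with
  | zero => exact fun i h => hS.ne_of_isTri_right (hx.isTri i) (by simpa using h.1)
  | one => exact fun i h => hx.ne_add_two i (by simpa [add_assoc, one_add_one_eq_two] using h.1)
  | more k ih _ =>
    rintro i ⟨h₀, h₁⟩
    push_cast at h₀ h₁
    refine ih (i + 1) ⟨by rw [h₁]; congr 1; ring, ?_⟩
    have tri := hx.isTri (i + 1)
    rw [h₁] at tri
    rcases hx.eq_pred_or_eq_succ hS tri with h | h
    · exact h.trans (congrArg x (by ring))
    · exact absurd (h₀.trans ((congrArg x (by ring)).trans (h.symm.trans (congrArg x (by ring)))))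
        (hx.ne_add_two i)

lemma succ_eq_succ {i j : ℤ} (h : x i = x j) : x (i + 1) = x (j + 1) := by
  wlog hij : i ≤ j generalizing i j
  · exact (this h.symm (by omega)).symm
  obtain rfl | hlt := hij.eq_or_lt
  · rfl
  have tri := hx.isTri i
  rw [h] at tri
  refine (hx.eq_pred_or_eq_succ hS tri).resolve_left fun hback => ?_
  obtain ⟨k, rfl⟩ : ∃ k : ℕ, j = i + k + 1 := ⟨(j - i - 1).toNat, by omega⟩
  exact hx.not_reversed hS k i ⟨h, by simpa using hback⟩

lemma add_eq_add {i j : ℤ} (h : x i = x j) (k : ℤ) : x (i + k) = x (j + k) := by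
  induction k using Int.induction_on with
  | zero => simpa using h
  | succ k ih => simpa [add_assoc] using hx.succ_eq_succ hS ih
  | pred k ih =>
    have := hx.reverse.succ_eq_succ hS (i := -(i + -k)) (j := -(j + -k)) (by simpa using ih)
    rw [show i + (-k - 1) = -(-(i + -k) + 1) by ring, show j + (-k - 1) = -(-(j + -k) + 1) by ring]
    exact this

lemma range_eq : Set.range x = nbrSet S v := by
  refine Set.Subset.antisymm ?_ fun y hy => ?_
  · rintro _ ⟨i, rfl⟩
    exact hS.mem_nbrSet_iff.2 ⟨_, hx.isTri i⟩
  · refine hS.mem_of_link_closed ⟨0, rfl⟩ ⟨_, hx.isTri 0⟩ ?_ (hS.mem_nbrSet_iff.1 hy)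
    rintro _ b ⟨i, rfl⟩ hb
    rcases hx.eq_pred_or_eq_succ hS hb with rfl | rfl <;> exact ⟨_, rfl⟩

theorem eq_iff {i j : ℤ} : x i = x j ↔ (6 : ℤ) ∣ i - j := by
  let periods : AddSubgroup ℤ :=
    { carrier := {p | x p = x 0}
      zero_mem' := rfl
      add_mem' := fun {p q} hp hq => (hx.add_eq_add hS hp q).trans (by rwa [zero_add])
      neg_mem' := fun {p} hp => by simpa using (hx.add_eq_add hS hp (-p)).symm }
  have mem_periods (i j : ℤ) : x i = x j ↔ i - j ∈ periods :=
    ⟨fun h => by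
      have := hx.add_eq_add hS h (-j)
      rwa [add_neg_cancel, ← sub_eq_add_neg] at this,
      fun h => by simpa using hx.add_eq_add hS h j⟩
  have index_periods : periods.index = 6 := by
    rw [← hS.ncard_nbrSet v, ← hx.range_eq hS]
    exact (ncard_range_eq_index mem_periods).symm
  obtain ⟨p, hp⟩ := Int.subgroup_cyclic periods
  rw [← AddSubgroup.zmultiples_eq_closure] at hp
  rw [hp, Int.index_zmultiples] at index_periods
  rw [mem_periods, hp, Int.mem_zmultiples_iff, ← Int.natAbs_dvd, index_periods]
  rfl

end IsLinkWalk

end LinkWalk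

/-! ### Developing maps -/

section Developing

variable {V : Type*} [DecidableEq V] {S : Finset (Finset V)} {φ ψ : ℤ × ℤ → V}

/-- The six neighbours of every lattice point have distinct images. -/
def StarInjective {V : Type*} (φ : ℤ × ℤ → V) : Prop :=
  ∀ z i j, φ (z + hexDir i) = φ (z + hexDir j) → i = j

/-- A simplicial map from the triangular lattice to `S` that unfolds adjacent triangles to
different triangles. -/
structure IsDeveloping (S : Finset (Finset V)) (φ : ℤ × ℤ → V) : Prop where
  isTri : ∀ z i, IsTri S (φ z) (φ (z + hexDir i)) (φ (z + hexDir (i + 1)))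
  ne_add_two : ∀ z i, φ (z + hexDir i) ≠ φ (z + hexDir (i + 2))

namespace IsDeveloping

lemma comp_affine (hφ : IsDeveloping S φ) (w : ℤ × ℤ) (d : DihedralGroup 6) :
    IsDeveloping S fun u => φ (w + d • u) := by
  constructor <;> intro z i <;> simp only [smul_add, smul_hexDir, ← add_assoc]
  · rcases smul_direction_add_one d i with h | h <;> rw [h]
    · exact hφ.isTri _ _
    · exact (hφ.isTri _ _).swap_right
  · rcases smul_direction_add_two d i with h | h <;> rw [h]
    · exact hφ.ne_add_two _ _
    · exact (hφ.ne_add_two _ _).symm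

lemma isLinkWalk (hφ : IsDeveloping S φ) (z : ℤ × ℤ) :
    IsLinkWalk S (φ z) fun k => φ (z + hexDir (k : ZMod 6)) where
  isTri k := by simpa using hφ.isTri z k
  ne_add_two k := by simpa using hφ.ne_add_two z k

variable (hS : IsHexSurface S) (hφ : IsDeveloping S φ)
include hS hφ

lemma starInjective : StarInjective φ := by
  intro z i j hij
  obtain ⟨i, rfl⟩ := ZMod.intCast_surjective i
  obtain ⟨j, rfl⟩ := ZMod.intCast_surjective j
  exact (ZMod.intCast_eq_intCast_iff_dvd_sub _ _ 6).2
    ((dvd_sub_comm).1 (((hφ.isLinkWalk z).eq_iff hS).1 hij))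

lemma exists_direction {z : ℤ × ℤ} {a b : V} (hab : IsTri S (φ z) a b) :
    ∃ i, a = φ (z + hexDir i) ∧ (b = φ (z + hexDir (i + 1)) ∨ b = φ (z + hexDir (i - 1))) := by
  obtain ⟨k, rfl⟩ : a ∈ Set.range fun k : ℤ => φ (z + hexDir (k : ZMod 6)) :=
    (hφ.isLinkWalk z).range_eq hS ▸ hS.mem_nbrSet_iff.2 ⟨b, hab⟩
  refine ⟨k, rfl, ?_⟩
  simpa using ((hφ.isLinkWalk z).eq_pred_or_eq_succ hS hab).symm

lemma surjective : Function.Surjective φ := by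
  refine hS.mem_of_skeleton_closed (R := Set.range φ) ⟨0, rfl⟩ ?_
  rintro _ b c ⟨z, rfl⟩ hb
  obtain ⟨i, rfl, -⟩ := hφ.exists_direction hS hb
  exact ⟨_, rfl⟩

lemma agree_on_star (hψ : IsDeveloping S ψ) {z : ℤ × ℤ} {i : ZMod 6} (h₀ : φ z = ψ z)
    (h₁ : φ (z + hexDir i) = ψ (z + hexDir i))
    (h₂ : φ (z + hexDir (i + 1)) = ψ (z + hexDir (i + 1))) (j : ZMod 6) :
    φ (z + hexDir j) = ψ (z + hexDir j) := by
  refine (cyclic_induction (P := fun j => φ (z + hexDir j) = ψ (z + hexDir j) ∧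
    φ (z + hexDir (j + 1)) = ψ (z + hexDir (j + 1))) ⟨h₁, h₂⟩ (fun j ⟨hj, hj'⟩ => ⟨hj', ?_⟩) j).1
  have triψ := hψ.isTri z (j + 1)
  have neψ := hψ.ne_add_two z j
  rw [← h₀, ← hj'] at triψ
  rw [← hj] at neψ
  rw [add_assoc, one_add_one_eq_two] at triψ ⊢
  exact hS.opposite_unique (hφ.isTri z j).swap_right
    (by simpa [add_assoc, one_add_one_eq_two] using hφ.isTri z (j + 1)) triψ
    (hφ.ne_add_two z j).symm neψ.symm

lemma eq_of_agree (hψ : IsDeveloping S ψ) (h₀ : φ 0 = ψ 0) (h₁ : φ (hexDir 0) = ψ (hexDir 0))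
    (h₂ : φ (hexDir 1) = ψ (hexDir 1)) : φ = ψ := by
  funext z
  refine (hexDir_induction (P := fun z => φ z = ψ z ∧ ∀ j, φ (z + hexDir j) = ψ (z + hexDir j))
    ⟨h₀, hφ.agree_on_star hS hψ h₀ (i := 0) (by simpa using h₁) (by simpa using h₂)⟩
    (fun z i ⟨hz, hstar⟩ => ⟨hstar i, hφ.agree_on_star hS hψ (hstar i) (i := i + 2) ?_ ?_⟩) z).1
  · rw [add_assoc, hexDir_add_hexDir]
    exact hstar (i + 1)
  · rw [show i + 2 + 1 = i + 3 by ring, hexDir_add_three, add_neg_cancel_right]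
    exact hz

lemma exists_smul (hψ : IsDeveloping S ψ) {z w : ℤ × ℤ} (h : φ z = ψ w) :
    ∃ d : DihedralGroup 6, ∀ u, φ (z + u) = ψ (w + d • u) := by
  obtain ⟨k, hk, hk'⟩ := hψ.exists_direction hS (h ▸ hφ.isTri z 0)
  obtain ⟨d, hd₀, hd₁⟩ : ∃ d : DihedralGroup 6,
      d • (0 : ZMod 6) = k ∧ φ (z + hexDir (0 + 1)) = ψ (w + hexDir (d • 1)) := by
    rcases hk' with hk' | hk'
    · exact ⟨.r k, zero_add k, by rw [hk', r_smul_direction, add_comm 1 k]⟩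
    · exact ⟨.sr (-k), by simp [sr_smul_direction],
        by rw [hk', sr_smul_direction, sub_neg_eq_add, neg_add_eq_sub]⟩
  have agree := (hφ.comp_affine z 1).eq_of_agree hS (hψ.comp_affine w d) (by simpa using h)
    (by simpa [smul_hexDir, hd₀] using hk) (by simpa [smul_hexDir] using hd₁)
  exact ⟨d, fun u => by simpa using congrFun agree u⟩

end IsDeveloping

end Developing

/-! ### Existence of developing maps -/

/-- In a group generated by a rotation `ρ` of order six around a vertex and a half-turn `h` around
the midpoint of an incident edge, the unit translation in the `i`-th direction. -/
def unitTranslation {G : Type*} [Group G] (ρ h : G) (i : ℕ) : G :=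
  (ρ ^ i)⁻¹ * (ρ ^ 3 * h) * ρ ^ i

section Translations

variable {G : Type*} [Group G] {ρ h : G}

lemma unitTranslation_mul_unitTranslation (h_sq : h * h = 1) (ρh_pow : (ρ * h) ^ 3 = 1) (i : ℕ) :
    unitTranslation ρ h i * unitTranslation ρ h (i + 2) = unitTranslation ρ h (i + 1) := by
  have relation : h * ρ * h = ρ⁻¹ * h * ρ⁻¹ := by
    rw [mul_assoc ρ⁻¹, eq_inv_mul_iff_mul_eq, eq_mul_inv_iff_mul_eq]
    calc ρ * (h * ρ * h) * ρ = (ρ * h) ^ 3 * h⁻¹ := by rw [pow_three]; group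
      _ = h := by rw [ρh_pow, one_mul, inv_eq_of_mul_eq_one_left h_sq]
  calc unitTranslation ρ h i * unitTranslation ρ h (i + 2)
      = (ρ ^ i)⁻¹ * ρ ^ 3 * (h * ρ * h) * ρ ^ (i + 2) := by
        simp only [unitTranslation, pow_add]
        group
    _ = (ρ ^ i)⁻¹ * ρ ^ 3 * (ρ⁻¹ * h * ρ⁻¹) * ρ ^ (i + 2) := by rw [relation]
    _ = unitTranslation ρ h (i + 1) := by
        simp only [unitTranslation, pow_add]
        group

lemma unitTranslation_add_three (h_sq : h * h = 1) (ρ_pow : ρ ^ 6 = 1) (i : ℕ) :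
    unitTranslation ρ h (i + 3) = (unitTranslation ρ h i)⁻¹ := by
  calc unitTranslation ρ h (i + 3) = (ρ ^ i)⁻¹ * h * ρ ^ 3 * ρ ^ i := by
        simp only [unitTranslation, pow_add]
        group
    _ = (ρ ^ i)⁻¹ * h⁻¹ * (ρ ^ 3)⁻¹ * ρ ^ i := by
        rw [inv_eq_of_mul_eq_one_left h_sq,
          inv_eq_of_mul_eq_one_left (show ρ ^ 3 * ρ ^ 3 = 1 by rw [← pow_add, ρ_pow])]
    _ = (unitTranslation ρ h i)⁻¹ := by
        simp only [unitTranslation]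
        group

lemma exists_translations (h_sq : h * h = 1) (ρ_pow : ρ ^ 6 = 1) (ρh_pow : (ρ * h) ^ 3 = 1) :
    ∃ T : ℤ × ℤ → G, (∀ z w, T (z + w) = T w * T z) ∧
      ∀ i : ℕ, T (hexDir i) = unitTranslation ρ h i := by
  set t := unitTranslation ρ h
  have t_add_two (i : ℕ) : t (i + 2) = (t i)⁻¹ * t (i + 1) :=
    eq_inv_mul_of_mul_eq (unitTranslation_mul_unitTranslation h_sq ρh_pow i)
  have comm : Commute (t 0) (t 1) := by
    have h₂ : t 1 * (t 0)⁻¹ = t 2 := by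
      rw [← unitTranslation_add_three h_sq ρ_pow 0]
      exact unitTranslation_mul_unitTranslation h_sq ρh_pow 1
    rw [t_add_two 0, mul_inv_eq_iff_eq_mul, mul_assoc, eq_inv_mul_iff_mul_eq] at h₂
    exact h₂
  let T : ℤ × ℤ → G := fun z => t 0 ^ z.1 * t 1 ^ z.2
  have T_add (z w : ℤ × ℤ) : T (z + w) = T w * T z := by
    simp only [T, Prod.fst_add, Prod.snd_add, add_comm z.1, add_comm z.2, zpow_add, mul_assoc]
    rw [← mul_assoc (t 0 ^ z.1), (comm.zpow_zpow z.1 w.2).eq, mul_assoc]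
  have T_hexDir (i : ℕ) : T (hexDir i) = t i ∧ T (hexDir (i + 1 : ℕ)) = t (i + 1) := by
    induction i with
    | zero => constructor <;> simp [T, hexDir]
    | succ i ih =>
      refine ⟨ih.2, ?_⟩
      rw [t_add_two, ← ih.1, ← ih.2, eq_inv_mul_iff_mul_eq, ← T_add]
      push_cast
      rw [add_assoc, one_add_one_eq_two, add_comm, hexDir_add_hexDir]
  exact ⟨T, T_add, fun i => (T_hexDir i).1⟩

end Translations

section Flags

variable {V : Type*} [DecidableEq V] {S : Finset (Finset V)}

/-- A flag of `S` (a vertex, an incident edge and an incident triangle), encoded by listing first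
the vertex, then the other end of the edge, then the third vertex of the triangle. -/
@[ext]
structure SurfaceFlag (S : Finset (Finset V)) where
  fst : V
  snd : V
  thd : V
  isTri : IsTri S fst snd thd

namespace SurfaceFlag

/-- The flag that differs from a given one only in its vertex. -/
def changeVertex : Equiv.Perm (SurfaceFlag S) :=
  Function.Involutive.toPerm (fun f => ⟨f.snd, f.fst, f.thd, f.isTri.swap_left⟩) fun _ => rfl

/-- The flag that differs from a given one only in its edge. -/
def changeEdge : Equiv.Perm (SurfaceFlag S) :=
  Function.Involutive.toPerm (fun f => ⟨f.fst, f.thd, f.snd, f.isTri.swap_right⟩) fun _ => rfl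

variable (hS : IsHexSurface S)

/-- The third vertex of the other triangle at the edge of a flag. -/
noncomputable def opposite (f : SurfaceFlag S) : V := (hS.existsUnique_opposite f.isTri).choose

lemma opposite_ne (f : SurfaceFlag S) : f.opposite hS ≠ f.thd :=
  (hS.existsUnique_opposite f.isTri).choose_spec.1.1

lemma isTri_opposite (f : SurfaceFlag S) : IsTri S f.fst f.snd (f.opposite hS) :=
  (hS.existsUnique_opposite f.isTri).choose_spec.1.2

/-- The flag that differs from a given one only in its triangle. -/
noncomputable def changeTriangle : Equiv.Perm (SurfaceFlag S) :=
  Function.Involutive.toPerm (fun f => ⟨f.fst, f.snd, f.opposite hS, f.isTri_opposite hS⟩)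
    fun f => SurfaceFlag.ext rfl rfl <| hS.opposite_unique (f.isTri_opposite hS)
      (isTri_opposite hS ⟨_, _, _, f.isTri_opposite hS⟩) f.isTri
      (opposite_ne hS ⟨_, _, _, f.isTri_opposite hS⟩) (f.opposite_ne hS).symm

lemma changeTriangle_mul_self : changeTriangle hS * changeTriangle hS = 1 :=
  Equiv.ext (Equiv.symm_apply_apply (changeTriangle hS))

lemma changeVertex_mul_changeTriangle :
    changeVertex * changeTriangle hS = changeTriangle hS * changeVertex :=
  Equiv.ext fun f => SurfaceFlag.ext rfl rfl <| hS.opposite_unique f.isTri (f.isTri_opposite hS)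
    (isTri_opposite hS (changeVertex f)).swap_left (f.opposite_ne hS)
    (opposite_ne hS (changeVertex f))

/-- The rotation by one triangle around the vertex of a flag. -/
noncomputable def rotation : Equiv.Perm (SurfaceFlag S) := changeTriangle hS * changeEdge

/-- The half-turn around the midpoint of the edge of a flag. -/
noncomputable def halfTurn : Equiv.Perm (SurfaceFlag S) := changeVertex * changeTriangle hS

lemma halfTurn_mul_self : halfTurn hS * halfTurn hS = 1 := by
  rw [halfTurn]
  nth_rw 1 [changeVertex_mul_changeTriangle]
  rw [mul_assoc, ← mul_assoc changeVertex, show changeVertex * changeVertex = (1 : Equiv.Perm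
    (SurfaceFlag S)) from rfl, one_mul, changeTriangle_mul_self]

lemma rotation_mul_halfTurn_pow_three : (rotation hS * halfTurn hS) ^ 3 = 1 := by
  have conj : rotation hS * halfTurn hS =
      changeTriangle hS * (changeEdge * changeVertex) * (changeTriangle hS)⁻¹ := by
    rw [rotation, halfTurn, inv_eq_of_mul_eq_one_left (changeTriangle_mul_self hS)]
    simp only [mul_assoc]
  have pow_three : (changeEdge * changeVertex : Equiv.Perm (SurfaceFlag S)) ^ 3 = 1 := rfl
  rw [conj, conj_pow, pow_three, mul_one, mul_inv_cancel]

lemma rotation_zpow_fst (f : SurfaceFlag S) (k : ℤ) : ((rotation hS ^ k) f).fst = f.fst := by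
  induction k using Int.induction_on with
  | zero => rfl
  | succ k ih => rw [← ih, add_comm, zpow_one_add]; rfl
  | pred k ih => rw [← ih, sub_eq_neg_add, zpow_add, zpow_neg_one]; rfl

lemma isLinkWalk_rotation (f : SurfaceFlag S) :
    IsLinkWalk S f.fst fun k => ((rotation hS ^ k) f).snd where
  isTri k := by
    rw [add_comm, zpow_one_add]
    exact rotation_zpow_fst hS f k ▸ ((rotation hS ^ k) f).isTri
  ne_add_two k := by
    rw [add_comm, zpow_add]
    exact (opposite_ne hS (changeEdge ((rotation hS ^ k) f))).symm

lemma rotation_pow_six : rotation hS ^ 6 = 1 := by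
  ext1 f
  have period (k : ℤ) : ((rotation hS ^ (k + 6)) f).snd = ((rotation hS ^ k) f).snd :=
    ((isLinkWalk_rotation hS f).eq_iff hS).2 (by simp)
  exact SurfaceFlag.ext (rotation_zpow_fst hS f 6) (period 0) (period 1)

end SurfaceFlag

lemma IsHexSurface.exists_flag (hS : IsHexSurface S) : Nonempty (SurfaceFlag S) := by
  obtain ⟨v⟩ := hS.connected.nonempty
  obtain ⟨x, hx⟩ : (nbrSet S v).Nonempty :=
    Set.nonempty_of_ncard_ne_zero (by simp [hS.ncard_nbrSet])
  obtain ⟨y, hy⟩ := hS.mem_nbrSet_iff.1 hx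
  exact ⟨⟨v, x, y, hy⟩⟩

theorem IsHexSurface.exists_isDeveloping (hS : IsHexSurface S) : ∃ φ, IsDeveloping S φ := by
  obtain ⟨f₀⟩ := hS.exists_flag
  obtain ⟨T, T_add, T_hexDir⟩ := exists_translations (SurfaceFlag.halfTurn_mul_self hS)
    (SurfaceFlag.rotation_pow_six hS) (SurfaceFlag.rotation_mul_halfTurn_pow_three hS)
  have fst_step (z : ℤ × ℤ) (i : ℕ) :
      (T (z + hexDir i) f₀).fst = ((SurfaceFlag.rotation hS ^ (i : ℤ)) (T z f₀)).snd := by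
    rw [T_add, T_hexDir, unitTranslation, ← zpow_natCast, ← zpow_neg, ← zpow_natCast]
    simp only [Equiv.Perm.mul_apply, SurfaceFlag.rotation_zpow_fst]
    rfl
  refine ⟨fun z => (T z f₀).fst, fun z i => ?_, fun z i => ?_⟩ <;>
    obtain ⟨i, rfl⟩ := ZMod.natCast_zmod_surjective i
  · have := (SurfaceFlag.isLinkWalk_rotation hS (T z f₀)).isTri i
    exact_mod_cast fst_step z i ▸ fst_step z (i + 1) ▸ this
  · have := (SurfaceFlag.isLinkWalk_rotation hS (T z f₀)).ne_add_two i
    exact_mod_cast fst_step z i ▸ fst_step z (i + 2) ▸ this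

end Flags

/-! ### Quotients of the triangular lattice -/

section Cover

variable {V : Type*} {φ : ℤ × ℤ → V}

/-- The map `φ` identifies the points of the lattice along the orbits of a group of lattice
symmetries that leaves the star of every vertex embedded. The group enters only through
`exists_smul`: two points with the same image are related by a symmetry preserving `φ`. -/
structure IsHexCover (φ : ℤ × ℤ → V) : Prop where
  surjective : Function.Surjective φ
  starInjective : StarInjective φ
  exists_smul : ∀ z w, φ z = φ w → ∃ d : DihedralGroup 6, ∀ u, φ (z + u) = φ (w + d • u)

lemma StarInjective.ne_add_hexDir (hφ : StarInjective φ) (z : ℤ × ℤ) (i : ZMod 6) :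
    φ z ≠ φ (z + hexDir i) := by
  have edge (w : ℤ × ℤ) (j : ZMod 6) : φ (w + hexDir (j + 2)) ≠ φ (w + hexDir (j + 1)) :=
    fun h => absurd (add_left_cancel (hφ _ _ _ h)) (by decide)
  have := edge (z - hexDir (i + 2)) i
  rwa [sub_add_cancel, ← hexDir_add_hexDir, add_comm (hexDir i), ← add_assoc,
    sub_add_cancel] at this

namespace IsHexCover

variable (hφ : IsHexCover φ)
include hφ

lemma ne_add_hexDir (z : ℤ × ℤ) (i : ZMod 6) : φ z ≠ φ (z + hexDir i) :=
  hφ.starInjective.ne_add_hexDir z i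

lemma add_hexDir_ne_succ (z : ℤ × ℤ) (i : ZMod 6) :
    φ (z + hexDir i) ≠ φ (z + hexDir (i + 1)) := fun h =>
  absurd (left_eq_add.1 (hφ.starInjective z _ _ h)) (by decide)

end IsHexCover

variable [DecidableEq V]

/-- The image of the lattice triangle at `z` between the directions `i` and `i + 1`. -/
def hexTri (φ : ℤ × ℤ → V) (z : ℤ × ℤ) (i : ZMod 6) : Finset V :=
  {φ z, φ (z + hexDir i), φ (z + hexDir (i + 1))}

open Classical in
/-- The complex formed by the images of all triangles of the lattice. -/
noncomputable def hexQuotient [Fintype V] (φ : ℤ × ℤ → V) : Finset (Finset V) :=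
  univ.filter fun T => ∃ z i, T = hexTri φ z i

lemma mem_hexQuotient [Fintype V] {T : Finset V} :
    T ∈ hexQuotient φ ↔ ∃ z i, T = hexTri φ z i := by
  simp [hexQuotient]

lemma hexTri_mem_hexQuotient [Fintype V] (φ : ℤ × ℤ → V) (z : ℤ × ℤ) (i : ZMod 6) :
    hexTri φ z i ∈ hexQuotient φ :=
  mem_hexQuotient.2 ⟨z, i, rfl⟩

lemma hexTri_add_hexDir (φ : ℤ × ℤ → V) (z : ℤ × ℤ) (i : ZMod 6) :
    hexTri φ (z + hexDir i) (i + 2) = hexTri φ z i := by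
  rw [hexTri, add_assoc, hexDir_add_hexDir, show i + 2 + 1 = i + 3 by ring, hexDir_add_three,
    add_neg_cancel_right, hexTri]
  grind

namespace IsHexCover

variable (hφ : IsHexCover φ)
include hφ

lemma add_hexDir_mem_hexTri_iff {z : ℤ × ℤ} {i j : ZMod 6} :
    φ (z + hexDir i) ∈ hexTri φ z j ↔ i = j ∨ i = j + 1 := by
  have inj (k : ZMod 6) : φ (z + hexDir i) = φ (z + hexDir k) ↔ i = k :=
    ⟨hφ.starInjective _ _ _, fun h => h ▸ rfl⟩
  simp only [hexTri, mem_insert, mem_singleton, inj, (hφ.ne_add_hexDir z i).symm, false_or]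

lemma hexTri_injective (z : ℤ × ℤ) : Function.Injective (hexTri φ z) := by
  intro i j h
  have common : ∀ i j : ZMod 6, (i = j ∨ i = j + 1) → (i + 1 = j ∨ i + 1 = j + 1) → i = j := by
    decide
  refine common i j ?_ ?_ <;> rw [← hφ.add_hexDir_mem_hexTri_iff (z := z), ← h,
    hφ.add_hexDir_mem_hexTri_iff] <;> simp

lemma exists_hexTri_eq_of_eq {z w : ℤ × ℤ} (h : φ w = φ z) (j : ZMod 6) :
    ∃ i, hexTri φ w j = hexTri φ z i := by
  obtain ⟨d, hd⟩ := hφ.exists_smul w z h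
  have image : hexTri φ w j = {φ z, φ (z + hexDir (d • j)), φ (z + hexDir (d • (j + 1)))} := by
    rw [hexTri, hd, hd, h, smul_hexDir, smul_hexDir]
  rw [image]
  rcases smul_direction_add_one d j with h | h
  · exact ⟨d • j, by rw [h, hexTri]⟩
  · exact ⟨d • (j + 1), by rw [h, hexTri, pair_comm]⟩

section Quotient

variable [Fintype V]

lemma exists_eq_hexTri {T : Finset V} (hT : T ∈ hexQuotient φ) {z : ℤ × ℤ} (hz : φ z ∈ T) :
    ∃ i, T = hexTri φ z i := by
  obtain ⟨w, j, rfl⟩ := mem_hexQuotient.1 hT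
  have hz' := hz
  rw [hexTri, mem_insert, mem_insert, mem_singleton] at hz'
  rcases hz' with h | h | h
  · exact hφ.exists_hexTri_eq_of_eq h.symm j
  · rw [← hexTri_add_hexDir]
    exact hφ.exists_hexTri_eq_of_eq h.symm _
  · rw [← hexTri_add_hexDir, ← hexTri_add_hexDir]
    exact hφ.exists_hexTri_eq_of_eq (by rw [add_assoc, hexDir_add_hexDir, h]) _

lemma exists_eq_add_hexDir {T : Finset V} (hT : T ∈ hexQuotient φ) {z : ℤ × ℤ} {b : V}
    (hz : φ z ∈ T) (hb : b ∈ T) (hne : b ≠ φ z) : ∃ i, b = φ (z + hexDir i) := by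
  obtain ⟨i, rfl⟩ := hφ.exists_eq_hexTri hT hz
  simp only [hexTri, mem_insert, mem_singleton, hne, false_or] at hb
  exact hb.elim (⟨_, ·⟩) (⟨_, ·⟩)

lemma card_eq_three_of_mem_hexQuotient {T : Finset V} (hT : T ∈ hexQuotient φ) : T.card = 3 := by
  obtain ⟨z, i, rfl⟩ := mem_hexQuotient.1 hT
  exact card_eq_three.2 ⟨_, _, _, hφ.ne_add_hexDir z i, hφ.ne_add_hexDir z (i + 1),
    hφ.add_hexDir_ne_succ z i, rfl⟩

lemma filter_mem_hexQuotient (z : ℤ × ℤ) :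
    ((hexQuotient φ).filter fun T => φ z ∈ T) = univ.image (hexTri φ z) := by
  ext T
  simp only [mem_filter, mem_image, mem_univ, true_and]
  constructor
  · rintro ⟨hT, hz⟩
    obtain ⟨i, rfl⟩ := hφ.exists_eq_hexTri hT hz
    exact ⟨i, rfl⟩
  · rintro ⟨i, rfl⟩
    exact ⟨hexTri_mem_hexQuotient φ z i, by simp [hexTri]⟩

lemma filter_edge_subset_hexQuotient (z : ℤ × ℤ) (k : ZMod 6) :
    ((hexQuotient φ).filter fun T => {φ z, φ (z + hexDir k)} ⊆ T) =
      {hexTri φ z k, hexTri φ z (k - 1)} := by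
  have mem_iff (j : ZMod 6) : φ (z + hexDir k) ∈ hexTri φ z j ↔ j = k ∨ j = k - 1 := by
    rw [hφ.add_hexDir_mem_hexTri_iff, eq_comm, eq_sub_iff_add_eq, eq_comm (a := k) (b := j + 1)]
  ext T
  simp only [insert_subset_iff, singleton_subset_iff, ← filter_filter, hφ.filter_mem_hexQuotient]
  simp only [mem_filter, mem_image, mem_univ, true_and, mem_insert, mem_singleton]
  constructor
  · rintro ⟨⟨j, rfl⟩, hj⟩
    exact ((mem_iff j).1 hj).imp (congrArg _) (congrArg _)
  · rintro (rfl | rfl)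
    · exact ⟨⟨_, rfl⟩, (mem_iff k).2 (.inl rfl)⟩
    · exact ⟨⟨_, rfl⟩, (mem_iff _).2 (.inr rfl)⟩

lemma connected_skeletonGraph_hexQuotient : (skeletonGraph (hexQuotient φ)).Connected := by
  have reachable (z : ℤ × ℤ) : (skeletonGraph (hexQuotient φ)).Reachable (φ 0) (φ z) := by
    refine hexDir_induction (P := fun z => (skeletonGraph _).Reachable (φ 0) (φ z)) (.refl _)
      (fun z i hz => hz.trans (SimpleGraph.Adj.reachable ?_)) z
    exact ⟨hφ.ne_add_hexDir z i, _, hexTri_mem_hexQuotient φ z i, by simp [hexTri],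
      by simp [hexTri]⟩
  exact SimpleGraph.connected_iff_exists_forall_reachable _ |>.2
    ⟨φ 0, hφ.surjective.forall.2 reachable⟩

lemma connected_linkGraph_hexQuotient (v : V) :
    ((linkGraph (hexQuotient φ) v).induce (nbrSet (hexQuotient φ) v)).Connected := by
  obtain ⟨z, rfl⟩ := hφ.surjective v
  have mem_nbrSet (i : ZMod 6) : φ (z + hexDir i) ∈ nbrSet (hexQuotient φ) (φ z) :=
    ⟨(hφ.ne_add_hexDir z i).symm, _, hexTri_mem_hexQuotient φ z i, by simp [hexTri],
      by simp [hexTri]⟩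
  have reachable (i : ZMod 6) := cyclic_induction (i := 0) (P := fun i =>
    ((linkGraph (hexQuotient φ) (φ z)).induce (nbrSet (hexQuotient φ) (φ z))).Reachable
      ⟨_, mem_nbrSet 0⟩ ⟨_, mem_nbrSet i⟩) (.refl _) (fun i hi => hi.trans
    (SimpleGraph.Adj.reachable ⟨hφ.add_hexDir_ne_succ z i, hexTri_mem_hexQuotient φ z i⟩)) i
  refine SimpleGraph.connected_iff_exists_forall_reachable _ |>.2 ⟨⟨_, mem_nbrSet 0⟩, ?_⟩
  rintro ⟨b, hne, T, hT, hz, hb⟩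
  obtain ⟨k, rfl⟩ := hφ.exists_eq_add_hexDir hT hz hb hne
  exact reachable k

theorem isHexSurface : IsHexSurface (hexQuotient φ) where
  card_eq_three _ := hφ.card_eq_three_of_mem_hexQuotient
  card_edge := by
    rintro e he ⟨T, hT, heT⟩
    obtain ⟨a, b, hab, rfl⟩ := card_eq_two.1 he
    obtain ⟨z, rfl⟩ := hφ.surjective a
    obtain ⟨k, rfl⟩ := hφ.exists_eq_add_hexDir hT (heT (by simp)) (heT (by simp)) hab.symm
    have two_triangles : hexTri φ z k ≠ hexTri φ z (k - 1) :=
      (hφ.hexTri_injective z).ne (by simpa [eq_sub_iff_add_eq] using by decide)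
    rw [hφ.filter_edge_subset_hexQuotient, card_pair two_triangles]
  link_connected := hφ.connected_linkGraph_hexQuotient
  connected := hφ.connected_skeletonGraph_hexQuotient
  degree v := by
    obtain ⟨z, rfl⟩ := hφ.surjective v
    rw [hφ.filter_mem_hexQuotient, card_image_of_injective _ (hφ.hexTri_injective z)]
    rfl

lemma isDeveloping : IsDeveloping (hexQuotient φ) φ where
  isTri := hexTri_mem_hexQuotient φ
  ne_add_two z i h := absurd (left_eq_add.1 (hφ.starInjective z _ _ h)) (by decide)

end Quotient

end IsHexCover

namespace IsDeveloping

variable {S : Finset (Finset V)} (hS : IsHexSurface S) (hφ : IsDeveloping S φ)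
include hS hφ

lemma isHexCover : IsHexCover φ where
  surjective := hφ.surjective hS
  starInjective := hφ.starInjective hS
  exists_smul _ _ := hφ.exists_smul hS hφ

lemma eq_hexQuotient [Fintype V] : S = hexQuotient φ := by
  ext T
  rw [mem_hexQuotient]
  constructor
  · intro hT
    obtain ⟨x, y, z, -, -, -, rfl⟩ := card_eq_three.1 (hS.card_eq_three T hT)
    obtain ⟨w, rfl⟩ := hφ.surjective hS x
    obtain ⟨i, rfl, rfl | rfl⟩ := hφ.exists_direction hS (a := y) (b := z) hT
    · exact ⟨w, i, rfl⟩
    · exact ⟨w, i - 1, by rw [hexTri, sub_add_cancel, pair_comm]⟩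
  · rintro ⟨z, i, rfl⟩
    exact hφ.isTri z i

end IsDeveloping

theorem isHexSurface_iff_exists_isHexCover [Fintype V] {S : Finset (Finset V)} :
    IsHexSurface S ↔ ∃ φ, IsHexCover φ ∧ S = hexQuotient φ := by
  constructor
  · intro hS
    obtain ⟨φ, hφ⟩ := hS.exists_isDeveloping
    exact ⟨φ, hφ.isHexCover hS, hφ.eq_hexQuotient hS⟩
  · rintro ⟨φ, hφ, rfl⟩
    exact hφ.isHexSurface

end Cover

/-! ### Deck transformations -/

section Deck

variable {V : Type*} {φ : ℤ × ℤ → V} {w : ℤ × ℤ} {d : DihedralGroup 6}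

/-- The lattice symmetry `u ↦ w + d • u` preserves `φ`. -/
def IsDeck (φ : ℤ × ℤ → V) (w : ℤ × ℤ) (d : DihedralGroup 6) : Prop :=
  ∀ u, φ (w + d • u) = φ u

lemma IsHexCover.exists_isDeck (hφ : IsHexCover φ) {x y : ℤ × ℤ} (h : φ x = φ y) :
    ∃ w d, IsDeck φ w d ∧ w + d • x = y := by
  obtain ⟨d, hd⟩ := hφ.exists_smul x y h
  refine ⟨y - d • x, d, fun u => ?_, sub_add_cancel _ _⟩
  calc φ (y - d • x + d • u) = φ (y + d • (u - x)) := by rw [smul_sub]; congr 1; abel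
    _ = φ u := by rw [← hd, add_sub_cancel]

lemma exists_add_hexDir_eq {x y : ℤ} (hx : 0 ≤ x) (hy : 0 ≤ y) (hxy : x + y ≤ 2) :
    ∃ j k, (x, y) + hexDir j = hexDir k := by
  obtain ⟨hx', hy'⟩ : x ≤ 2 ∧ y ≤ 2 := by omega
  interval_cases x <;> interval_cases y <;> first | omega | decide

-- The witnesses are lattice points next to the centre of rotation.
lemma exists_rotation_add_hexDir_eq (w : ℤ × ℤ) {i : ZMod 6} (hi : i ≠ 0) :
    ∃ z j k, w + DihedralGroup.r i • z + hexDir j = z + hexDir k := by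
  suffices ∃ z, ∃ x y : ℤ, w + DihedralGroup.r i • z = z + (x, y) ∧ 0 ≤ x ∧ 0 ≤ y ∧ x + y ≤ 2 by
    obtain ⟨z, x, y, hz, hx, hy, hxy⟩ := this
    obtain ⟨j, k, hjk⟩ := exists_add_hexDir_eq hx hy hxy
    exact ⟨z, j, k, by rw [hz, add_assoc, hjk]⟩
  obtain ⟨a, b⟩ := w
  have nonzero : ∀ i : ZMod 6, i ≠ 0 → i = 1 ∨ i = 2 ∨ i = 3 ∨ i = 4 ∨ i = 5 := by decide
  have witness (z : ℤ × ℤ) (p q : ℤ × ℤ) (hp : hexDir i = p) (hq : hexDir (1 + i) = q)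
      (hx : 0 ≤ a + (z.1 * p.1 + z.2 * q.1) - z.1) (hy : 0 ≤ b + (z.1 * p.2 + z.2 * q.2) - z.2)
      (hxy : a + (z.1 * p.1 + z.2 * q.1) - z.1 + (b + (z.1 * p.2 + z.2 * q.2) - z.2) ≤ 2) :
      ∃ z, ∃ x y : ℤ, (a, b) + DihedralGroup.r i • z = z + (x, y) ∧
        0 ≤ x ∧ 0 ≤ y ∧ x + y ≤ 2 := by
    refine ⟨z, _, _, ?_, hx, hy, hxy⟩
    rw [smul_lattice_def, r_smul_direction, r_smul_direction, zero_add, hp, hq]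
    ext <;> simp
  rcases nonzero i hi with rfl | rfl | rfl | rfl | rfl
  · exact witness (-b, a + b) (0, 1) (-1, 1) rfl rfl (by lia) (by lia) (by lia)
  · exact witness ((a - b) / 3, (a - b) / 3 + b) (-1, 1) (-1, 0) rfl rfl (by lia) (by lia) (by lia)
  · exact witness (a / 2, b / 2) (-1, 0) (0, -1) rfl rfl (by lia) (by lia) (by lia)
  · exact witness ((b - a) / 3 + a, (b - a) / 3) (0, -1) (1, -1) rfl rfl (by lia) (by lia) (by lia)
  · exact witness (a + b, -a) (1, -1) (1, 0) rfl rfl (by lia) (by lia) (by lia)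

lemma StarInjective.rotation_eq_zero (hφ : StarInjective φ) {i : ZMod 6}
    (h : IsDeck φ w (.r i)) : i = 0 := by
  by_contra hi
  obtain ⟨z, j, k, hz⟩ := exists_rotation_add_hexDir_eq w hi
  obtain rfl : j = k := (hφ (z - hexDir j) _ _ <| by
    rw [sub_add_cancel, ← h z, sub_add_eq_add_sub, ← hz, add_sub_cancel_right])
  have fixed : w + DihedralGroup.r i • z = z := add_right_cancel hz
  have := h (z + hexDir 0)
  rw [smul_add, ← add_assoc, fixed, smul_hexDir, r_smul_direction, zero_add] at this
  exact hi (hφ _ _ _ this)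

/-- The lattice of translations preserving `φ`. -/
def translationLattice (φ : ℤ × ℤ → V) : AddSubgroup (ℤ × ℤ) where
  carrier := {t | ∀ z, φ (z + t) = φ z}
  zero_mem' z := by rw [add_zero]
  add_mem' ha hb z := by rw [← add_assoc, hb, ha]
  neg_mem' {a} ha z := by rw [← ha (z + -a), neg_add_cancel_right]

lemma mem_translationLattice {t : ℤ × ℤ} : t ∈ translationLattice φ ↔ ∀ z, φ (z + t) = φ z :=
  Iff.rfl

lemma isDeck_r_zero_iff : IsDeck φ w (.r 0) ↔ w ∈ translationLattice φ := by
  simp only [IsDeck, ← DihedralGroup.one_def, one_smul, mem_translationLattice, add_comm w]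

lemma IsHexCover.eq_iff_sub_mem (hφ : IsHexCover φ) (h : ∀ w i, ¬ IsDeck φ w (.sr i))
    (x y : ℤ × ℤ) : φ x = φ y ↔ x - y ∈ translationLattice φ := by
  constructor
  · intro hxy
    obtain ⟨w, i | i, hdeck, hw⟩ := hφ.exists_isDeck hxy.symm
    · obtain rfl := hφ.starInjective.rotation_eq_zero hdeck
      rw [← isDeck_r_zero_iff, ← hw]
      simpa only [← DihedralGroup.one_def, one_smul, add_sub_cancel_right] using hdeck
    · exact absurd hdeck (h w i)
  · intro hxy
    rw [← hxy y, add_sub_cancel]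

end Deck

/-! ### Orientability -/

section Orientability

variable {V : Type*} [DecidableEq V] {φ : ℤ × ℤ → V}

/-- The map `o` is a coherent choice of cyclic orderings of the triangles of `S`. -/
structure IsOrientation (S : Finset (Finset V)) (o : Finset V → V × V × V) : Prop where
  vertices : ∀ T ∈ S, ({(o T).1, (o T).2.1, (o T).2.2} : Finset V) = T
  coherent : ∀ T ∈ S, ∀ T' ∈ S, T ≠ T' → ∀ x y : V,
    (x, y) ∈ dirEdges (o T) → ({x, y} : Finset V) ⊆ T' → (y, x) ∈ dirEdges (o T')

lemma isOrientable_iff_exists_isOrientation {S : Finset (Finset V)} :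
    IsOrientable S ↔ ∃ o, IsOrientation S o :=
  exists_congr fun _ => ⟨fun ⟨h, h'⟩ => ⟨h, h'⟩, fun ⟨h, h'⟩ => ⟨h, h'⟩⟩

/-- The arcs of the counterclockwise boundary of the lattice triangle at `z` between the directions
`i` and `i + 1`. -/
def hexArcs (φ : ℤ × ℤ → V) (z : ℤ × ℤ) (i : ZMod 6) : Finset (V × V) :=
  dirEdges (φ z, φ (z + hexDir i), φ (z + hexDir (i + 1)))

/-- The arcs of the clockwise boundary of the lattice triangle at `z` between the directions `i`
and `i + 1`. -/
def hexArcsReversed (φ : ℤ × ℤ → V) (z : ℤ × ℤ) (i : ZMod 6) : Finset (V × V) :=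
  dirEdges (φ z, φ (z + hexDir (i + 1)), φ (z + hexDir i))

lemma dirEdges_eq_or_eq {p q r a b c : V} (h : ({p, q, r} : Finset V) = {a, b, c}) (hab : a ≠ b)
    (hac : a ≠ c) (hbc : b ≠ c) :
    dirEdges (p, q, r) = dirEdges (a, b, c) ∨ dirEdges (p, q, r) = dirEdges (a, c, b) := by
  obtain ⟨ha, hb, hc⟩ : (a = p ∨ a = q ∨ a = r) ∧ (b = p ∨ b = q ∨ b = r) ∧
      (c = p ∨ c = q ∨ c = r) := by
    simp only [Finset.ext_iff, mem_insert, mem_singleton] at h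
    exact ⟨(h a).2 (by simp), (h b).2 (by simp), (h c).2 (by simp)⟩
  rcases ha with rfl | rfl | rfl <;> rcases hb with rfl | rfl | rfl <;>
    rcases hc with rfl | rfl | rfl <;>
    first | contradiction | exact .inl (by grind [dirEdges]) | exact .inr (by grind [dirEdges])

lemma hexArcs_add_hexDir (φ : ℤ × ℤ → V) (z : ℤ × ℤ) (i : ZMod 6) :
    hexArcs φ (z + hexDir i) (i + 2) = hexArcs φ z i := by
  rw [hexArcs, add_assoc, hexDir_add_hexDir, show i + 2 + 1 = i + 3 by ring, hexDir_add_three,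
    add_neg_cancel_right, hexArcs, dirEdges, dirEdges]
  grind

lemma exists_hexTri_eq_of_mem_hexArcs {z : ℤ × ℤ} {i : ZMod 6} {x y : V}
    (h : (x, y) ∈ hexArcs φ z i) :
    ∃ w j, hexTri φ z i = hexTri φ w j ∧ x = φ w ∧ y = φ (w + hexDir j) := by
  simp only [hexArcs, dirEdges, mem_insert, mem_singleton, Prod.mk.injEq] at h
  rcases h with ⟨rfl, rfl⟩ | ⟨rfl, rfl⟩ | ⟨rfl, rfl⟩
  · exact ⟨z, i, rfl, rfl, rfl⟩
  · exact ⟨z + hexDir i, i + 2, (hexTri_add_hexDir φ z i).symm, rfl,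
      by rw [add_assoc, hexDir_add_hexDir]⟩
  · refine ⟨z + hexDir (i + 1), i + 1 + 3, ?_, rfl, by
      rw [hexDir_add_three, add_neg_cancel_right]⟩
    rw [← hexTri_add_hexDir φ z i, ← hexTri_add_hexDir φ (z + hexDir i), add_assoc,
      hexDir_add_hexDir, show i + 2 + 2 = i + 1 + 3 by ring]

lemma exists_hexTri_hexArcs_eq_of_mem {z w : ℤ × ℤ} {j : ZMod 6} (h : φ z ∈ hexTri φ w j) :
    ∃ w' j', φ w' = φ z ∧ hexTri φ w' j' = hexTri φ w j ∧ hexArcs φ w' j' = hexArcs φ w j := by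
  simp only [hexTri, mem_insert, mem_singleton] at h
  rcases h with h | h | h
  · exact ⟨w, j, h.symm, rfl, rfl⟩
  · exact ⟨_, _, h.symm, hexTri_add_hexDir φ w j, hexArcs_add_hexDir φ w j⟩
  · exact ⟨w + hexDir j + hexDir (j + 2), j + 2 + 2,
      by rw [add_assoc, hexDir_add_hexDir, h], by simp only [hexTri_add_hexDir],
      by simp only [hexArcs_add_hexDir]⟩

namespace IsHexCover

variable (hφ : IsHexCover φ)
include hφ

lemma dirEdges_eq_hexArcs_or {t : V × V × V} {z : ℤ × ℤ} {i : ZMod 6}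
    (ht : ({t.1, t.2.1, t.2.2} : Finset V) = hexTri φ z i) :
    dirEdges t = hexArcs φ z i ∨ dirEdges t = hexArcsReversed φ z i :=
  dirEdges_eq_or_eq ht (hφ.ne_add_hexDir z i) (hφ.ne_add_hexDir z _) (hφ.add_hexDir_ne_succ z i)

lemma notMem_hexArcsReversed (z : ℤ × ℤ) (i : ZMod 6) :
    (φ z, φ (z + hexDir i)) ∉ hexArcsReversed φ z i := by
  simp only [hexArcsReversed, dirEdges, mem_insert, mem_singleton, Prod.mk.injEq, true_and]
  simp [hφ.add_hexDir_ne_succ z i, hφ.ne_add_hexDir z]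

lemma hexArcs_ne_hexArcsReversed (z : ℤ × ℤ) (i : ZMod 6) :
    hexArcs φ z i ≠ hexArcsReversed φ z i := fun h =>
  hφ.notMem_hexArcsReversed z i (h ▸ mem_insert_self _ _)

lemma hexArcs_eq_of_hexTri_eq (hdeck : ∀ w i, ¬ IsDeck φ w (.sr i)) {z w : ℤ × ℤ} {i j : ZMod 6}
    (h : hexTri φ z i = hexTri φ w j) : hexArcs φ z i = hexArcs φ w j := by
  obtain ⟨w', j', hw', tri_eq, arcs_eq⟩ :=
    exists_hexTri_hexArcs_eq_of_mem (h ▸ mem_insert_self (φ z) _ : φ z ∈ hexTri φ w j)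
  have translate (u : ℤ × ℤ) : φ (w' + u) = φ (z + u) := by
    rw [hφ.eq_iff_sub_mem hdeck, add_sub_add_right_eq_sub, ← hφ.eq_iff_sub_mem hdeck, hw']
  have tri_eq' : hexTri φ w' j' = hexTri φ z j' := by simp only [hexTri, translate, hw']
  rw [hφ.hexTri_injective z (h.trans (tri_eq.symm.trans tri_eq')), ← arcs_eq]
  simp only [hexArcs, translate, hw']

variable [Fintype V]

lemma dirEdges_succ_eq_hexArcs {o : Finset V → V × V × V}
    (ho : IsOrientation (hexQuotient φ) o) {z : ℤ × ℤ} {i : ZMod 6}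
    (h : dirEdges (o (hexTri φ z i)) = hexArcs φ z i) :
    dirEdges (o (hexTri φ z (i + 1))) = hexArcs φ z (i + 1) := by
  have arc_mem : (φ z, φ (z + hexDir (i + 1))) ∈ dirEdges (o (hexTri φ z (i + 1))) :=
    ho.coherent _ (hexTri_mem_hexQuotient φ z i) _ (hexTri_mem_hexQuotient φ z (i + 1))
      ((hφ.hexTri_injective z).ne (by simpa using by decide)) _ _
      (by rw [h]; simp [hexArcs, dirEdges]) (by simp [hexTri, insert_subset_iff])
  exact (hφ.dirEdges_eq_hexArcs_or (ho.vertices _ (hexTri_mem_hexQuotient φ z _))).resolve_right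
    fun reversed => hφ.notMem_hexArcsReversed z (i + 1) (reversed ▸ arc_mem)

lemma dirEdges_eq_hexArcs {o : Finset V → V × V × V}
    (ho : IsOrientation (hexQuotient φ) o) {z : ℤ × ℤ} {i : ZMod 6}
    (h : dirEdges (o (hexTri φ z i)) = hexArcs φ z i)
    (w : ℤ × ℤ) (j : ZMod 6) : dirEdges (o (hexTri φ w j)) = hexArcs φ w j := by
  have around {w : ℤ × ℤ} {i : ZMod 6} (h : dirEdges (o (hexTri φ w i)) = hexArcs φ w i) :=
    cyclic_induction (P := fun j => dirEdges (o (hexTri φ w j)) = hexArcs φ w j) h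
      fun j => hφ.dirEdges_succ_eq_hexArcs ho
  have everywhere := hexDir_induction
    (P := fun u => ∀ j, dirEdges (o (hexTri φ (z + u) j)) = hexArcs φ (z + u) j)
    (by simpa using around h) (fun u k hu => around (i := k + 2) <| by
      rw [← add_assoc, hexTri_add_hexDir, hexArcs_add_hexDir, hu]) (w - z)
  simpa using everywhere j

lemma not_isDeck_sr_of_isOrientable (h : IsOrientable (hexQuotient φ)) (w : ℤ × ℤ) (i : ZMod 6) :
    ¬ IsDeck φ w (.sr i) := by
  intro hdeck
  obtain ⟨o, ho⟩ := isOrientable_iff_exists_isOrientation.1 h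
  have image_zero : φ w = φ 0 := by simpa using hdeck 0
  have image (j : ZMod 6) : φ (w + hexDir (-j - i)) = φ (0 + hexDir j) := by
    rw [zero_add, ← hdeck (hexDir j), smul_hexDir, sr_smul_direction]
  have image_succ : φ (w + hexDir (-1 - i + 1)) = φ (0 + hexDir 0) := by
    rw [← image, show -1 - i + 1 = -0 - i by ring]
  have tri_eq : hexTri φ w (-1 - i) = hexTri φ 0 0 := by
    rw [hexTri, hexTri, image_zero, image, image_succ, pair_comm, zero_add 1]
  have arcs_eq : hexArcs φ w (-1 - i) = hexArcsReversed φ 0 0 := by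
    rw [hexArcs, hexArcsReversed, image_zero, image, image_succ, zero_add 1]
  rcases hφ.dirEdges_eq_hexArcs_or (ho.vertices _ (hexTri_mem_hexQuotient φ 0 0)) with h | h
  · have h' := hφ.dirEdges_eq_hexArcs ho h w (-1 - i)
    rw [tri_eq, arcs_eq, h] at h'
    exact hφ.hexArcs_ne_hexArcsReversed 0 0 h'
  · rw [← arcs_eq, ← tri_eq] at h
    have h' := hφ.dirEdges_eq_hexArcs ho h 0 0
    rw [← tri_eq, h, arcs_eq] at h'
    exact hφ.hexArcs_ne_hexArcsReversed 0 0 h'.symm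

lemma isOrientable_of_forall_not_isDeck_sr (h : ∀ w i, ¬ IsDeck φ w (.sr i)) :
    IsOrientable (hexQuotient φ) := by
  have exists_triple (T : Finset V) : ∃ t : V × V × V, T ∈ hexQuotient φ →
      ∃ z i, T = hexTri φ z i ∧ t = (φ z, φ (z + hexDir i), φ (z + hexDir (i + 1))) := by
    by_cases hT : T ∈ hexQuotient φ
    · obtain ⟨z, i, hz⟩ := mem_hexQuotient.1 hT
      exact ⟨_, fun _ => ⟨z, i, hz, rfl⟩⟩
    · exact ⟨(φ 0, φ 0, φ 0), fun hT' => absurd hT' hT⟩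
  choose o ho using exists_triple
  have dirEdges_o (z : ℤ × ℤ) (i : ZMod 6) : dirEdges (o (hexTri φ z i)) = hexArcs φ z i := by
    obtain ⟨w, j, tri_eq, triple_eq⟩ := ho _ (hexTri_mem_hexQuotient φ z i)
    rw [triple_eq, hφ.hexArcs_eq_of_hexTri_eq h tri_eq, hexArcs]
  refine ⟨o, fun T hT => ?_, fun T hT T' hT' hne x y hxy hsub => ?_⟩
  · obtain ⟨z, i, hz, triple_eq⟩ := ho T hT
    rw [triple_eq, hz, hexTri]
  · obtain ⟨z, i, rfl⟩ := mem_hexQuotient.1 hT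
    rw [dirEdges_o] at hxy
    obtain ⟨w, j, tri_eq, rfl, rfl⟩ := exists_hexTri_eq_of_mem_hexArcs hxy
    have mem_edge : T' ∈ ({hexTri φ w j, hexTri φ w (j - 1)} : Finset (Finset V)) := by
      rw [← hφ.filter_edge_subset_hexQuotient]
      exact mem_filter.2 ⟨hT', hsub⟩
    rw [mem_insert, mem_singleton, ← tri_eq] at mem_edge
    rw [mem_edge.resolve_left hne.symm, dirEdges_o]
    simp [hexArcs, dirEdges]

theorem isOrientable_hexQuotient_iff :
    IsOrientable (hexQuotient φ) ↔ ∀ w i, ¬ IsDeck φ w (.sr i) :=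
  ⟨hφ.not_isDeck_sr_of_isOrientable, hφ.isOrientable_of_forall_not_isDeck_sr⟩

end IsHexCover

end Orientability

/-! ### Isomorphism classes -/

section Isomorphism

lemma exists_equiv_comp_eq {A X Y : Type*} {f : A → X} {g : A → Y} (hf : Function.Surjective f)
    (hg : Function.Surjective g) (h : ∀ a b, f a = f b ↔ g a = g b) :
    ∃ σ : X ≃ Y, ∀ a, σ (f a) = g a := by
  choose s hs using hf
  have apply_section (a : A) : g (s (f a)) = g a := (h _ _).1 (hs (f a))
  refine ⟨Equiv.ofBijective (g ∘ s) ⟨fun x y hxy => ?_, fun y => ?_⟩, apply_section⟩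
  · rw [← hs x, ← hs y, h]
    exact hxy
  · obtain ⟨a, rfl⟩ := hg y
    exact ⟨f a, apply_section a⟩

/-- Some lattice symmetry maps the fibres of `φ` onto the fibres of `ψ`. -/
def HexEquiv {V W : Type*} (φ : ℤ × ℤ → V) (ψ : ℤ × ℤ → W) : Prop :=
  ∃ w, ∃ d : DihedralGroup 6, ∀ x y, φ x = φ y ↔ ψ (w + d • x) = ψ (w + d • y)

lemma surjective_affine (w : ℤ × ℤ) (d : DihedralGroup 6) :
    Function.Surjective fun u : ℤ × ℤ => w + d • u := fun z => ⟨d⁻¹ • (z - w), by simp⟩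

lemma IsHexCover.comp_bijective {V W : Type*} {φ : ℤ × ℤ → V} (hφ : IsHexCover φ)
    {σ : V → W} (hσ : Function.Bijective σ) : IsHexCover (σ ∘ φ) where
  surjective := hσ.surjective.comp hφ.surjective
  starInjective z i j h := hφ.starInjective z i j (hσ.injective h)
  exists_smul z w h := (hφ.exists_smul z w (hσ.injective h)).imp
    fun _ hd u => congrArg σ (hd u)

variable {V W : Type*} [Fintype V] [DecidableEq V] [Fintype W] [DecidableEq W]

lemma image_hexQuotient (φ : ℤ × ℤ → V) (σ : V → W) :
    (hexQuotient φ).image (fun T => T.image σ) = hexQuotient (σ ∘ φ) := by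
  have image_hexTri (z : ℤ × ℤ) (i : ZMod 6) :
      (hexTri φ z i).image σ = hexTri (σ ∘ φ) z i := by
    simp only [hexTri, image_insert, image_singleton, Function.comp_apply]
  ext T
  simp only [mem_image, mem_hexQuotient]
  constructor
  · rintro ⟨_, ⟨z, i, rfl⟩, rfl⟩
    exact ⟨z, i, image_hexTri z i⟩
  · rintro ⟨z, i, rfl⟩
    exact ⟨_, ⟨z, i, rfl⟩, image_hexTri z i⟩

variable {n : ℕ}

theorem isoComplex_hexQuotient_iff {φ ψ : ℤ × ℤ → Fin n} (hφ : IsHexCover φ)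
    (hψ : IsHexCover ψ) : IsoComplex n (hexQuotient φ) (hexQuotient ψ) ↔ HexEquiv φ ψ := by
  constructor
  · rintro ⟨σ, hσ⟩
    have developing : IsDeveloping (hexQuotient ψ) (σ ∘ φ) := by
      rw [← hσ, image_hexQuotient]
      exact (hφ.comp_bijective σ.bijective).isDeveloping
    obtain ⟨w, hw⟩ := hψ.surjective (σ (φ 0))
    obtain ⟨d, hd⟩ := developing.exists_smul hψ.isHexSurface hψ.isDeveloping (z := 0) hw.symm
    refine ⟨w, d, fun x y => ?_⟩
    rw [← hd, ← hd, zero_add, zero_add, Function.comp_apply, Function.comp_apply,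
      σ.injective.eq_iff]
  · rintro ⟨w, d, h⟩
    obtain ⟨σ, hσ⟩ := exists_equiv_comp_eq hφ.surjective
      (hψ.surjective.comp (surjective_affine w d)) h
    refine ⟨σ, ?_⟩
    rw [image_hexQuotient, show ⇑σ ∘ φ = _ from funext hσ]
    exact ((hψ.isDeveloping.comp_affine w d).eq_hexQuotient hψ.isHexSurface).symm

lemma isoComplex_equivalence (n : ℕ) : Equivalence (IsoComplex n) where
  refl S := ⟨1, by simp⟩
  symm := by
    rintro S _ ⟨σ, rfl⟩
    exact ⟨σ⁻¹, by simp [image_image, Function.comp_def]⟩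
  trans := by
    rintro S _ _ ⟨σ, rfl⟩ ⟨τ, rfl⟩
    exact ⟨τ * σ, by simp [image_image, Function.comp_def]⟩

lemma numClasses_eq_card_quotient {X : Type*} {P : Finset (Finset (Fin n)) → Prop}
    (F : X → Finset (Finset (Fin n))) (hF : ∀ x, P (F x))
    (exhaustive : ∀ S, P S → ∃ x, IsoComplex n S (F x)) (r : Setoid X)
    (hr : ∀ x y, IsoComplex n (F x) (F y) ↔ r x y) : numClasses n P = Nat.card (Quotient r) := by
  have iso := isoComplex_equivalence n
  have iso_subtype : Equivalence fun A B : {S // P S} => IsoComplex n A.1 B.1 :=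
    ⟨fun A => iso.refl A.1, iso.symm, iso.trans⟩
  refine (Nat.card_eq_of_bijective (Quotient.lift (fun x => Quot.mk _ ⟨F x, hF x⟩)
    fun x y hxy => Quot.sound ((hr x y).2 hxy)) ⟨?_, ?_⟩).symm
  · rintro ⟨x⟩ ⟨y⟩ hxy
    exact Quotient.sound ((hr x y).1 ((iso_subtype.quot_mk_eq_iff _ _).1 hxy))
  · rintro ⟨S, hS⟩
    obtain ⟨x, hx⟩ := exhaustive S hS
    exact ⟨⟦x⟧, Quot.sound (iso.symm hx)⟩

theorem numClasses_equivelar_eq_card_quotient {X : Type*} {P : Finset (Finset (Fin n)) → Prop}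
    (Φ : X → ℤ × ℤ → Fin n) (hΦ : ∀ x, IsHexCover (Φ x)) (hP : ∀ x, P (hexQuotient (Φ x)))
    (exhaustive : ∀ φ : ℤ × ℤ → Fin n, IsHexCover φ → P (hexQuotient φ) → ∃ x, HexEquiv φ (Φ x))
    (r : Setoid X) (hr : ∀ x y, HexEquiv (Φ x) (Φ y) ↔ r x y) :
    numClasses n (fun S => IsCombSurface n S ∧ IsEquivelar n S ∧ P S ∧ eulerChar n S = 0) =
      Nat.card (Quotient r) := by
  refine numClasses_eq_card_quotient (fun x => hexQuotient (Φ x)) (fun x => ?_) ?_ r fun x y => ?_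
  · obtain ⟨surface, equivelar, euler⟩ := isHexSurface_iff.1 (hΦ x).isHexSurface
    exact ⟨surface, equivelar, hP x, euler⟩
  · rintro S ⟨surface, equivelar, hS, euler⟩
    obtain ⟨φ, hφ, rfl⟩ :=
      isHexSurface_iff_exists_isHexCover.1 (isHexSurface_iff.2 ⟨surface, equivelar, euler⟩)
    obtain ⟨x, hx⟩ := exhaustive φ hφ hS
    exact ⟨x, (isoComplex_hexQuotient_iff hφ (hΦ x)).2 hx⟩
  · rw [isoComplex_hexQuotient_iff (hΦ x) (hΦ y), hr]

end Isomorphism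

/-! ### Lattices of tori -/

section Torus

open Pointwise

/-- The subgroup `L` separates the vertices of every star of the triangular lattice, so that the
quotient of the lattice by `L` is again triangulated. -/
def IsStarLattice (L : AddSubgroup (ℤ × ℤ)) : Prop :=
  ∀ i j, hexDir i - hexDir j ∈ L → i = j

/-- The translation lattices of the `n`-vertex triangulated tori. -/
@[ext]
structure TorusLattice (n : ℕ) where
  lattice : AddSubgroup (ℤ × ℤ)
  index_eq : lattice.index = n
  isStarLattice : IsStarLattice lattice

lemma index_dihedral_smul (g : DihedralGroup 6) (L : AddSubgroup (ℤ × ℤ)) :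
    (g • L).index = L.index :=
  AddSubgroup.index_map_equiv L (DistribMulAction.toAddEquiv (ℤ × ℤ) g)

lemma IsStarLattice.smul {L : AddSubgroup (ℤ × ℤ)} (hL : IsStarLattice L) (g : DihedralGroup 6) :
    IsStarLattice (g • L) := fun i j hij => by
  rw [AddSubgroup.mem_pointwise_smul_iff_inv_smul_mem, smul_sub, smul_hexDir, smul_hexDir] at hij
  exact MulAction.injective g⁻¹ (hL _ _ hij)

/-- The point group of the triangular lattice acts on the translation lattices of tori. -/
instance torusLatticeAction (n : ℕ) : MulAction (DihedralGroup 6) (TorusLattice n) where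
  smul g L := ⟨g • L.lattice, (index_dihedral_smul g _).trans L.index_eq, L.isStarLattice.smul g⟩
  one_smul L := TorusLattice.ext (one_smul _ L.lattice)
  mul_smul g h L := TorusLattice.ext (mul_smul g h L.lattice)

lemma TorusLattice.lattice_smul {n : ℕ} (g : DihedralGroup 6) (L : TorusLattice n) :
    (g • L).lattice = g • L.lattice := rfl

section LatticeCover

variable {V : Type*} {φ : ℤ × ℤ → V} {L : AddSubgroup (ℤ × ℤ)}

lemma isHexCover_of_eq_iff_sub_mem (surjective : Function.Surjective φ)
    (eq_iff : ∀ x y, φ x = φ y ↔ x - y ∈ L) (hL : IsStarLattice L) : IsHexCover φ where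
  surjective := surjective
  starInjective z i j h := hL i j (by simpa only [eq_iff, add_sub_add_left_eq_sub] using h)
  exists_smul z w h := ⟨1, fun u => by
    rwa [one_smul, eq_iff, add_sub_add_right_eq_sub, ← eq_iff]⟩

lemma not_isDeck_sr_of_eq_iff_sub_mem (eq_iff : ∀ x y, φ x = φ y ↔ x - y ∈ L)
    (hL : IsStarLattice L) (w : ℤ × ℤ) (i : ZMod 6) : ¬ IsDeck φ w (.sr i) := by
  intro deck
  have hw : w ∈ L := by simpa using (eq_iff _ _).1 (deck 0)
  have fixes (j : ZMod 6) : DihedralGroup.sr i • j = j := by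
    have := (eq_iff _ _).1 (deck (hexDir j))
    rw [add_sub_assoc, AddSubgroup.add_mem_cancel_left _ hw, smul_hexDir] at this
    exact hL _ _ this
  have moves : ∀ i : ZMod 6, ¬ ∀ j : ZMod 6, DihedralGroup.sr i • j = j := by decide
  exact moves i fixes

lemma IsHexCover.isStarLattice_translationLattice (hφ : IsHexCover φ) :
    IsStarLattice (translationLattice φ) := fun i j hij =>
  hφ.starInjective 0 i j (by
    simpa using mem_translationLattice.1 hij (hexDir j))

end LatticeCover

lemma exists_surjective_fin {A X : Type*} {n : ℕ} {f : A → X} (hf : Function.Surjective f)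
    (hX : Nat.card X = n) (hn : n ≠ 0) :
    ∃ g : A → Fin n, Function.Surjective g ∧ ∀ a b, g a = g b ↔ f a = f b := by
  have : Finite X := Nat.finite_of_card_ne_zero (hX ▸ hn)
  let e := Finite.equivFinOfCardEq hX
  exact ⟨e ∘ f, e.surjective.comp hf, fun a b => e.apply_eq_iff_eq⟩

lemma exists_surjective_fin_eq_iff_sub_mem {n : ℕ} (hn : n ≠ 0) {L : AddSubgroup (ℤ × ℤ)}
    (hL : L.index = n) :
    ∃ φ : ℤ × ℤ → Fin n, Function.Surjective φ ∧ ∀ x y, φ x = φ y ↔ x - y ∈ L := by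
  obtain ⟨φ, surjective, eq_iff⟩ :=
    exists_surjective_fin (QuotientAddGroup.mk_surjective (s := L)) hL hn
  exact ⟨φ, surjective, fun x y => by rw [eq_iff, eq_comm, QuotientAddGroup.eq, neg_add_eq_sub]⟩

lemma hexEquiv_iff_mem_orbit {n : ℕ} {V W : Type*} {φ : ℤ × ℤ → V} {ψ : ℤ × ℤ → W}
    {L M : TorusLattice n} (hφ : ∀ x y, φ x = φ y ↔ x - y ∈ L.lattice)
    (hψ : ∀ x y, ψ x = ψ y ↔ x - y ∈ M.lattice) :
    HexEquiv φ ψ ↔ L ∈ MulAction.orbit (DihedralGroup 6) M := by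
  rw [MulAction.mem_orbit_symm, MulAction.mem_orbit_iff]
  refine exists_comm.trans (exists_congr fun d => ?_)
  simp only [hφ, hψ, add_sub_add_left_eq_sub, ← smul_sub, exists_const]
  rw [TorusLattice.ext_iff, TorusLattice.lattice_smul]
  constructor
  · intro h
    ext u
    simpa [AddSubgroup.mem_pointwise_smul_iff_inv_smul_mem] using h (d⁻¹ • u) 0
  · rintro h x y
    rw [← h, AddSubgroup.smul_mem_pointwise_smul_iff]

theorem numClasses_torus {n : ℕ} (hn : n ≠ 0) :
    numClasses n (fun S => IsCombSurface n S ∧ IsEquivelar n S ∧ IsOrientable S ∧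
      eulerChar n S = 0) =
      Nat.card (MulAction.orbitRel.Quotient (DihedralGroup 6) (TorusLattice n)) := by
  choose Φ surjective eq_iff using
    fun L : TorusLattice n => exists_surjective_fin_eq_iff_sub_mem hn L.index_eq
  have cover (L : TorusLattice n) : IsHexCover (Φ L) :=
    isHexCover_of_eq_iff_sub_mem (surjective L) (eq_iff L) L.isStarLattice
  refine numClasses_equivelar_eq_card_quotient Φ cover (fun L => ?_) (fun φ hφ orientable => ?_) _
    fun L M => hexEquiv_iff_mem_orbit (eq_iff L) (eq_iff M)
  · rw [(cover L).isOrientable_hexQuotient_iff]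
    exact not_isDeck_sr_of_eq_iff_sub_mem (eq_iff L) L.isStarLattice
  · have fibres := hφ.eq_iff_sub_mem (hφ.isOrientable_hexQuotient_iff.1 orientable)
    have index : (translationLattice φ).index = n := by
      rw [← ncard_range_eq_index fibres, hφ.surjective.range_eq, Set.ncard_univ, Nat.card_fin]
    let L : TorusLattice n := ⟨translationLattice φ, index, hφ.isStarLattice_translationLattice⟩
    exact ⟨L, 0, 1, fun x y => by rw [one_smul, one_smul, zero_add, zero_add, fibres, eq_iff L]⟩

end Torus

/-! ### Hermite normal form -/

/-- The lattice spanned by `(d, 0)` and `(b, a)`; those with `a ≠ 0` and `b < d` are the sublattices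
of `ℤ × ℤ` of finite index, each exactly once. -/
def hermiteLattice (a b d : ℕ) : AddSubgroup (ℤ × ℤ) :=
  AddSubgroup.closure {((d : ℤ), (0 : ℤ)), ((b : ℤ), (a : ℤ))}

section HermiteLattice

variable {a b d : ℕ} {x y : ℤ}

lemma mem_hermiteLattice :
    (x, y) ∈ hermiteLattice a b d ↔ ∃ k : ℤ, y = k * a ∧ (d : ℤ) ∣ x - k * b := by
  simp only [hermiteLattice, AddSubgroup.mem_closure_pair, Prod.smul_mk, Prod.mk_add_mk,
    Prod.mk.injEq, smul_eq_mul, mul_zero, zero_add]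
  constructor
  · rintro ⟨m, k, rfl, rfl⟩
    exact ⟨k, rfl, m, by ring⟩
  · rintro ⟨k, rfl, m, hm⟩
    exact ⟨m, k, by linear_combination -hm, rfl⟩

lemma hermiteLattice_le_iff {L : AddSubgroup (ℤ × ℤ)} :
    hermiteLattice a b d ≤ L ↔ ((d : ℤ), (0 : ℤ)) ∈ L ∧ ((b : ℤ), (a : ℤ)) ∈ L := by
  rw [hermiteLattice, AddSubgroup.closure_le, Set.insert_subset_iff, Set.singleton_subset_iff]
  rfl

lemma exists_mem_hermiteLattice_iff : (∃ x, (x, y) ∈ hermiteLattice a b d) ↔ (a : ℤ) ∣ y := by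
  simp only [mem_hermiteLattice]
  constructor
  · rintro ⟨x, k, rfl, -⟩
    exact dvd_mul_left _ _
  · rintro ⟨k, rfl⟩
    exact ⟨k * b, k, mul_comm _ _, by simp⟩

lemma mk_zero_mem_hermiteLattice_iff (ha : a ≠ 0) :
    (x, 0) ∈ hermiteLattice a b d ↔ (d : ℤ) ∣ x := by
  simp [mem_hermiteLattice, ha]

lemma mk_sub_mk_mem_hermiteLattice_iff (ha : a ≠ 0) {x' y' : ℤ} :
    (x, y) - (x', y') ∈ hermiteLattice a b d ↔
      (y : ZMod a) = y' ∧ ((x - y / a * b : ℤ) : ZMod d) = ((x' - y' / a * b : ℤ) : ZMod d) := by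
  rw [Prod.mk_sub_mk, mem_hermiteLattice, eq_comm, ZMod.intCast_eq_intCast_iff_dvd_sub, eq_comm,
    ZMod.intCast_eq_intCast_iff_dvd_sub, dvd_def, exists_and_right.symm]
  refine exists_congr fun k => ?_
  rw [mul_comm k]
  refine and_congr_right fun hk => ?_
  rw [eq_add_of_sub_eq' hk, Int.add_mul_ediv_left _ _ (Int.natCast_ne_zero.2 ha)]
  ring_nf

lemma index_hermiteLattice (ha : a ≠ 0) (hd : d ≠ 0) : (hermiteLattice a b d).index = a * d := by
  have := NeZero.mk ha
  have := NeZero.mk hd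
  let f (z : ℤ × ℤ) : ZMod a × ZMod d := (z.2, ((z.1 - z.2 / a * b : ℤ) : ZMod d))
  have surjective : Function.Surjective f := fun ⟨p, q⟩ => by
    have : (p.val : ℤ) / a = 0 :=
      Int.ediv_eq_zero_of_lt (Int.natCast_nonneg _) (Int.ofNat_lt.2 p.val_lt)
    exact ⟨(q.val, p.val), by simp only [f, this]; simp⟩
  rw [← ncard_range_eq_index (f := f), surjective.range_eq, Set.ncard_univ, Nat.card_prod,
    Nat.card_zmod, Nat.card_zmod]
  rintro ⟨x, y⟩ ⟨x', y'⟩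
  rw [mk_sub_mk_mem_hermiteLattice_iff ha, Prod.mk.injEq]

lemma hermiteLattice_injective {a' b' d' : ℕ} (ha : a ≠ 0) (ha' : a' ≠ 0) (hb : b < d)
    (hb' : b' < d') (h : hermiteLattice a b d = hermiteLattice a' b' d') :
    a = a' ∧ b = b' ∧ d = d' := by
  have height (m : ℕ) : a ∣ m ↔ a' ∣ m := by
    rw [← Int.natCast_dvd_natCast, ← Int.natCast_dvd_natCast,
      ← exists_mem_hermiteLattice_iff (b := b) (d := d), h, exists_mem_hermiteLattice_iff]
  have width (m : ℕ) : d ∣ m ↔ d' ∣ m := by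
    rw [← Int.natCast_dvd_natCast, ← Int.natCast_dvd_natCast,
      ← mk_zero_mem_hermiteLattice_iff (b := b) ha, h, mk_zero_mem_hermiteLattice_iff ha']
  obtain rfl : a = a' := Nat.dvd_antisymm ((height _).2 dvd_rfl) ((height _).1 dvd_rfl)
  obtain rfl : d = d' := Nat.dvd_antisymm ((width _).2 dvd_rfl) ((width _).1 dvd_rfl)
  have shift : ((b - b' : ℤ), (0 : ℤ)) ∈ hermiteLattice a b d := by
    have mem := (hermiteLattice_le_iff.1 h.ge).2
    simpa using sub_mem (hermiteLattice_le_iff.1 le_rfl).2 mem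
  have := Int.eq_zero_of_abs_lt_dvd ((mk_zero_mem_hermiteLattice_iff ha).1 shift)
    (by rw [abs_lt]; omega)
  omega

end HermiteLattice

lemma exists_nat_mem_iff_dvd (P : AddSubgroup ℤ) : ∃ a : ℕ, ∀ x, x ∈ P ↔ (a : ℤ) ∣ x := by
  obtain ⟨a, rfl⟩ := Int.subgroup_cyclic P
  refine ⟨a.natAbs, fun x => ?_⟩
  rw [← AddSubgroup.zmultiples_eq_closure, Int.mem_zmultiples_iff, Int.natCast_natAbs, abs_dvd]

lemma eq_hermiteLattice {L : AddSubgroup (ℤ × ℤ)} {a b d : ℕ}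
    (height : ∀ y : ℤ, (∃ x, (x, y) ∈ L) ↔ (a : ℤ) ∣ y) (width : ∀ x, (x, 0) ∈ L ↔ (d : ℤ) ∣ x)
    (mem : ((b : ℤ), (a : ℤ)) ∈ L) : L = hermiteLattice a b d := by
  refine le_antisymm (fun ⟨x, y⟩ hxy => mem_hermiteLattice.2 ?_)
    (hermiteLattice_le_iff.2 ⟨(width _).2 dvd_rfl, mem⟩)
  obtain ⟨k, rfl⟩ := (height y).1 ⟨x, hxy⟩
  refine ⟨k, mul_comm _ _, (width _).1 ?_⟩
  simpa [mul_comm k] using sub_mem hxy (zsmul_mem mem k)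

lemma exists_eq_hermiteLattice {n : ℕ} (hn : n ≠ 0) {L : AddSubgroup (ℤ × ℤ)} (hL : L.index = n) :
    ∃ a b d : ℕ, a * d = n ∧ b < d ∧ L = hermiteLattice a b d := by
  obtain ⟨a, height'⟩ := exists_nat_mem_iff_dvd (L.map (AddMonoidHom.snd ℤ ℤ))
  obtain ⟨d, width'⟩ := exists_nat_mem_iff_dvd (L.comap (AddMonoidHom.inl ℤ ℤ))
  have height (y : ℤ) : (∃ x, (x, y) ∈ L) ↔ (a : ℤ) ∣ y := by simpa using height' y
  have width (x : ℤ) : (x, 0) ∈ L ↔ (d : ℤ) ∣ x := by simpa using width' x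
  have smul_mem (z : ℤ × ℤ) : n • z ∈ L := hL ▸ AddSubgroup.nsmul_index_mem L z
  have ha : a ≠ 0 := by
    rintro rfl
    exact hn (by simpa using (height n).1 ⟨0, by simpa using smul_mem (0, 1)⟩)
  have hd : d ≠ 0 := by
    rintro rfl
    exact hn (by simpa using (width n).1 (by simpa using smul_mem (1, 0)))
  have hd' : (d : ℤ) ≠ 0 := Int.natCast_ne_zero.2 hd
  obtain ⟨x, hx⟩ := (height a).2 dvd_rfl
  obtain ⟨b, hb⟩ := Int.eq_ofNat_of_zero_le (Int.emod_nonneg x hd')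
  have mem : ((b : ℤ), (a : ℤ)) ∈ L := by
    rw [← hb, Int.emod_def]
    simpa using sub_mem hx ((width (d * (x / d))).2 (dvd_mul_right _ _))
  have eq := eq_hermiteLattice height width mem
  refine ⟨a, b, d, ?_, ?_, eq⟩
  · rw [← index_hermiteLattice (b := b) ha hd, ← eq, hL]
  · exact_mod_cast hb ▸ Int.emod_lt_of_pos x (by positivity)

/-! ### Counting lattices by Burnside's lemma -/

section CountTori

open Pointwise

/-- The nonzero differences of two directions, up to sign. -/
def shortVectors : Finset (ℤ × ℤ) :=
  {(1, 0), (2, 0), (0, -1), (1, -1), (-1, -1), (2, -1), (0, -2), (1, -2), (2, -2)}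

lemma isStarLattice_iff {L : AddSubgroup (ℤ × ℤ)} :
    IsStarLattice L ↔ ∀ v ∈ shortVectors, v ∉ L := by
  constructor
  · intro hL v hv hvL
    have difference : ∀ v ∈ shortVectors, ∃ i j, i ≠ j ∧ hexDir i - hexDir j = v := by decide
    obtain ⟨i, j, hij, rfl⟩ := difference v hv
    exact hij (hL i j hvL)
  · intro hL i j hij
    have short : ∀ i j, i = j ∨ hexDir i - hexDir j ∈ shortVectors ∨
        -(hexDir i - hexDir j) ∈ shortVectors := by decide
    rcases short i j with h | h | h
    · exact h
    · exact absurd hij (hL _ h)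
    · exact absurd (neg_mem hij) (hL _ h)

/-- The condition on a Hermite normal form under which its lattice is the translation lattice of a
triangulated torus. -/
abbrev IsStarHermite (a b d : ℕ) : Prop :=
  3 ≤ d ∧ (a = 1 → 2 ≤ b ∧ b + 3 ≤ d ∧ 2 * b ≠ d ∧ 2 * b + 1 ≠ d ∧ 2 * b + 2 ≠ d) ∧
    (a = 2 → 1 ≤ b ∧ b + 3 ≤ d)

lemma dvd_iff_of_lt_three_mul {d m : ℤ} (lower : -d < m) (upper : m < 3 * d) :
    d ∣ m ↔ m = 0 ∨ m = d ∨ m = 2 * d := by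
  constructor
  · rintro ⟨k, rfl⟩
    have : 0 < d := by linarith
    have : -1 < k := by nlinarith
    have : k < 3 := by nlinarith
    interval_cases k <;> simp [mul_comm]
  · rintro (rfl | rfl | rfl) <;> simp

section HermiteLattice

variable {a b d : ℕ} {x y : ℤ}

lemma mem_hermiteLattice_iff_dvd (ha : a ≠ 0) :
    (x, y) ∈ hermiteLattice a b d ↔ (a : ℤ) ∣ y ∧ (a * d : ℤ) ∣ a * x - b * y := by
  have ha' : (a : ℤ) ≠ 0 := Int.natCast_ne_zero.2 ha
  rw [mem_hermiteLattice, dvd_def, exists_and_right.symm]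
  refine exists_congr fun k => ?_
  rw [mul_comm k]
  refine and_congr_right fun hk => ?_
  rw [hk, show (a * x - b * (a * k) : ℤ) = a * (x - k * b) by ring, mul_dvd_mul_iff_left ha']

lemma isStarLattice_hermiteLattice_one_iff (hb : b < d) (hd : 3 ≤ d) :
    IsStarLattice (hermiteLattice 1 b d) ↔
      2 ≤ b ∧ b + 3 ≤ d ∧ 2 * b ≠ d ∧ 2 * b + 1 ≠ d ∧ 2 * b + 2 ≠ d := by
  have mem_iff (x y : ℤ) : (x, y) ∈ hermiteLattice 1 b d ↔ (d : ℤ) ∣ x - y * b := by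
    simp [mem_hermiteLattice]
  simp only [isStarLattice_iff, shortVectors, mem_insert, mem_singleton, forall_eq_or_imp,
    forall_eq, mem_iff]
  simp (disch := omega) only [dvd_iff_of_lt_three_mul]
  omega

lemma isStarLattice_hermiteLattice_two_iff (hb : b < d) (hd : 3 ≤ d) :
    IsStarLattice (hermiteLattice 2 b d) ↔ 1 ≤ b ∧ b + 3 ≤ d := by
  have mem_iff (x : ℤ) : (x, -2) ∈ hermiteLattice 2 b d ↔ (d : ℤ) ∣ x + b := by
    simp [mem_hermiteLattice_iff_dvd, mul_comm (b : ℤ), ← mul_add, mul_dvd_mul_iff_left]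
  have not_mem (x : ℤ) : (x, -1) ∉ hermiteLattice 2 b d := fun h =>
    absurd (exists_mem_hermiteLattice_iff.1 ⟨x, h⟩) (by decide)
  simp only [isStarLattice_iff, shortVectors, mem_insert, mem_singleton, forall_eq_or_imp,
    forall_eq, mem_iff, not_mem, mk_zero_mem_hermiteLattice_iff two_ne_zero, not_false_eq_true,
    true_and]
  simp (disch := omega) only [dvd_iff_of_lt_three_mul]
  omega

lemma isStarLattice_hermiteLattice_of_three_le (ha : 3 ≤ a) (hd : 3 ≤ d) :
    IsStarLattice (hermiteLattice a b d) := by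
  rw [isStarLattice_iff]
  rintro ⟨x, y⟩ hv mem
  have bounds : ∀ v ∈ shortVectors, |v.2| < 3 ∧ 0 < |v.1| + |v.2| ∧ |v.1| < 3 := by decide
  obtain ⟨hy, hxy, hx⟩ := bounds _ hv
  obtain rfl : y = 0 := Int.eq_zero_of_abs_lt_dvd (exists_mem_hermiteLattice_iff.1 ⟨x, mem⟩)
    (by dsimp only at hy; omega)
  obtain rfl : x = 0 := Int.eq_zero_of_abs_lt_dvd
    ((mk_zero_mem_hermiteLattice_iff (by omega)).1 mem) (by dsimp only at hx; omega)
  exact lt_irrefl _ hxy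

lemma isStarLattice_hermiteLattice_iff (ha : a ≠ 0) (hb : b < d) :
    IsStarLattice (hermiteLattice a b d) ↔ IsStarHermite a b d := by
  by_cases hd : 3 ≤ d
  · obtain rfl | rfl | ha : a = 1 ∨ a = 2 ∨ 3 ≤ a := by omega
    · simp [IsStarHermite, isStarLattice_hermiteLattice_one_iff hb hd, hd]
    · simp [IsStarHermite, isStarLattice_hermiteLattice_two_iff hb hd, hd]
    · exact iff_of_true (isStarLattice_hermiteLattice_of_three_le ha hd) (by omega)
  · refine iff_of_false (fun star => ?_) fun h => hd h.1
    have short := isStarLattice_iff.1 star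
    obtain rfl | rfl : d = 1 ∨ d = 2 := by omega
    · exact short (1, 0) (by decide) ((mk_zero_mem_hermiteLattice_iff ha).2 dvd_rfl)
    · exact short (2, 0) (by decide) ((mk_zero_mem_hermiteLattice_iff ha).2 dvd_rfl)

lemma smul_hermiteLattice_eq_iff (ha : a ≠ 0) (hd : d ≠ 0) (g : DihedralGroup 6) :
    g • hermiteLattice a b d = hermiteLattice a b d ↔
      g • ((d : ℤ), (0 : ℤ)) ∈ hermiteLattice a b d ∧
        g • ((b : ℤ), (a : ℤ)) ∈ hermiteLattice a b d := by
  set L := hermiteLattice a b d with hL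
  have index_ne_zero : (g • L).index ≠ 0 := by
    rw [index_dihedral_smul, index_hermiteLattice ha hd]
    exact mul_ne_zero ha hd
  have eq_iff_le : g • L = L ↔ g • L ≤ L := by
    refine ⟨le_of_eq, fun h => h.eq_or_lt.resolve_right fun lt => ?_⟩
    have : (g • L).FiniteIndex := ⟨index_ne_zero⟩
    exact (AddSubgroup.index_strictAnti lt).ne (index_dihedral_smul g L).symm
  rw [eq_iff_le, AddSubgroup.pointwise_smul_le_iff, hL, hermiteLattice_le_iff,
    AddSubgroup.mem_inv_pointwise_smul_iff, AddSubgroup.mem_inv_pointwise_smul_iff]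

lemma smul_hermiteLattice_eq_iff_dvd (ha : a ≠ 0) (hd : d ≠ 0) {g : DihedralGroup 6}
    {p q r s : ℤ} (h0 : hexDir (g • 0) = (p, q)) (h1 : hexDir (g • 1) = (r, s)) :
    g • hermiteLattice a b d = hermiteLattice a b d ↔
      (a : ℤ) ∣ d * q ∧ (a : ℤ) ∣ b * q ∧
        (a * d : ℤ) ∣ a ^ 2 * r + a * b * (p - s) - b ^ 2 * q := by
  have hd' : (d : ℤ) ≠ 0 := Int.natCast_ne_zero.2 hd
  have first : (a * d : ℤ) ∣ a * (d * p) - b * (d * q) ↔ (a : ℤ) ∣ b * q := by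
    rw [show (a * (d * p) - b * (d * q) : ℤ) = a * d * p - d * (b * q) by ring,
      dvd_sub_right (dvd_mul_right _ _), mul_comm (a : ℤ) d, mul_dvd_mul_iff_left hd']
  have second : (a : ℤ) ∣ b * q + a * s ↔ (a : ℤ) ∣ b * q := dvd_add_left (dvd_mul_right _ _)
  have third : (a * (b * p + a * r) - b * (b * q + a * s) : ℤ) =
      a ^ 2 * r + a * b * (p - s) - b ^ 2 * q := by ring
  rw [smul_hermiteLattice_eq_iff ha hd, smul_lattice_def, smul_lattice_def, h0, h1]
  simp only [Prod.smul_mk, Prod.mk_add_mk, smul_eq_mul, zero_mul, add_zero,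
    mem_hermiteLattice_iff_dvd ha, first, second, third]
  tauto

lemma r_smul_hermiteLattice_eq_iff (ha : a ≠ 0) (hd : d ≠ 0) {i : ZMod 6} (hi : i = 1 ∨ i = 2) :
    DihedralGroup.r i • hermiteLattice a b d = hermiteLattice a b d ↔
      (a ∣ d ∧ a ∣ b) ∧ a * d ∣ a ^ 2 + a * b + b ^ 2 := by
  zify
  rw [and_assoc, ← dvd_neg (b := (a ^ 2 + a * b + b ^ 2 : ℤ))]
  rcases hi with rfl | rfl
  · rw [smul_hermiteLattice_eq_iff_dvd ha hd (p := 0) (q := 1) (r := -1) (s := 1) rfl rfl]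
    ring_nf
  · rw [smul_hermiteLattice_eq_iff_dvd ha hd (p := -1) (q := 1) (r := -1) (s := 0) rfl rfl]
    ring_nf

lemma sr_zero_smul_hermiteLattice_eq_iff (ha : a ≠ 0) (hd : d ≠ 0) :
    DihedralGroup.sr (0 : ZMod 6) • hermiteLattice a b d = hermiteLattice a b d ↔
      a * d ∣ a ^ 2 + 2 * a * b := by
  rw [smul_hermiteLattice_eq_iff_dvd ha hd (p := 1) (q := 0) (r := 1) (s := -1) rfl rfl]
  zify
  ring_nf
  simp

lemma sr_one_smul_hermiteLattice_eq_iff (ha : a ≠ 0) (hd : d ≠ 0) :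
    DihedralGroup.sr (1 : ZMod 6) • hermiteLattice a b d = hermiteLattice a b d ↔
      (a ∣ d ∧ a ∣ b) ∧ a * d ∣ 2 * a * b + b ^ 2 := by
  rw [smul_hermiteLattice_eq_iff_dvd ha hd (p := 1) (q := -1) (r := 0) (s := -1) rfl rfl,
    mul_neg_one, dvd_neg, mul_neg_one, dvd_neg, and_assoc]
  zify
  ring_nf

lemma sr_two_smul_hermiteLattice_eq_iff (ha : a ≠ 0) (hd : d ≠ 0) :
    DihedralGroup.sr (2 : ZMod 6) • hermiteLattice a b d = hermiteLattice a b d ↔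
      (a ∣ d ∧ a ∣ b) ∧ a ^ 2 ≡ b ^ 2 [MOD a * d] := by
  rw [smul_hermiteLattice_eq_iff_dvd ha hd (p := 0) (q := -1) (r := -1) (s := 0) rfl rfl,
    mul_neg_one, dvd_neg, mul_neg_one, dvd_neg, and_assoc, Nat.modEq_iff_dvd]
  zify
  ring_nf

lemma r_three_smul (L : AddSubgroup (ℤ × ℤ)) : DihedralGroup.r (3 : ZMod 6) • L = L := by
  have neg (z : ℤ × ℤ) : (DihedralGroup.r (3 : ZMod 6))⁻¹ • z = -z := by
    rw [show (DihedralGroup.r (3 : ZMod 6))⁻¹ = DihedralGroup.r 3 from rfl, smul_lattice_def,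
      r_smul_direction, r_smul_direction, hexDir_add_three, hexDir_add_three, smul_neg, smul_neg,
      ← neg_add, ← eq_smul_hexDir_add]
  ext z
  rw [AddSubgroup.mem_pointwise_smul_iff_inv_smul_mem, neg, neg_mem_iff]

/-- The order of the stabilizer of `hermiteLattice a b d` in the point group. -/
def hermiteStabilizerCard (a b d : ℕ) : ℕ :=
  2 * (1 + (if a * d ∣ a ^ 2 + 2 * a * b then 1 else 0) +
    if a ∣ d ∧ a ∣ b then
      2 * (if a * d ∣ a ^ 2 + a * b + b ^ 2 then 1 else 0) +
        (if a * d ∣ 2 * a * b + b ^ 2 then 1 else 0) +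
        (if a ^ 2 ≡ b ^ 2 [MOD a * d] then 1 else 0)
    else 0)

lemma sum_dihedral_of_antipodal {f : DihedralGroup 6 → ℕ} (hf : ∀ g, f (.r 3 * g) = f g) :
    ∑ g, f g = 2 * (f (.r 0) + f (.r 1) + f (.r 2) + f (.sr 0) + f (.sr 1) + f (.sr 2)) := by
  have univ_eq : (univ : Finset (DihedralGroup 6)) = {.r 0, .r 1, .r 2, .sr 0, .sr 1, .sr 2,
      .r 3 * .r 0, .r 3 * .r 1, .r 3 * .r 2, .r 3 * .sr 0, .r 3 * .sr 1, .r 3 * .sr 2} := by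
    decide
  rw [univ_eq]
  repeat rw [sum_insert (by decide)]
  simp only [sum_singleton, hf]
  ring

open Classical in
lemma card_stabilizer_hermiteLattice (ha : a ≠ 0) (hd : d ≠ 0) :
    #{g : DihedralGroup 6 | g • hermiteLattice a b d = hermiteLattice a b d} =
      hermiteStabilizerCard a b d := by
  rw [card_filter, sum_dihedral_of_antipodal fun g => by rw [mul_smul, r_three_smul]]
  simp only [r_smul_hermiteLattice_eq_iff ha hd (Or.inl rfl),
    r_smul_hermiteLattice_eq_iff ha hd (Or.inr rfl), sr_zero_smul_hermiteLattice_eq_iff ha hd,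
    sr_one_smul_hermiteLattice_eq_iff ha hd, sr_two_smul_hermiteLattice_eq_iff ha hd,
    DihedralGroup.r_zero, one_smul, if_true, ite_and, hermiteStabilizerCard]
  split_ifs <;> ring

end HermiteLattice

/-- The Hermite normal forms `⟨(a, d), b⟩` of the translation lattices of `n`-vertex tori. -/
def torusParams (n : ℕ) : Finset (Σ _ : ℕ × ℕ, ℕ) :=
  {p ∈ n.divisorsAntidiagonal.sigma fun p => range p.2 | IsStarHermite p.1.1 p.2 p.1.2}

lemma mem_torusParams {n a b d : ℕ} :
    ⟨(a, d), b⟩ ∈ torusParams n ↔ (a * d = n ∧ n ≠ 0) ∧ b < d ∧ IsStarHermite a b d := by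
  simp [torusParams, and_assoc]

lemma exists_equiv_torusParams (n : ℕ) (hn : n ≠ 0) :
    ∃ e : torusParams n ≃ TorusLattice n,
      ∀ p, (e p).lattice = hermiteLattice p.1.1.1 p.1.2 p.1.1.2 := by
  have factors {a d : ℕ} (h : a * d = n) : a ≠ 0 ∧ d ≠ 0 := mul_ne_zero_iff.1 (h ▸ hn)
  let toLattice (p : torusParams n) : TorusLattice n :=
    have h := mem_torusParams.1 p.2
    { lattice := hermiteLattice p.1.1.1 p.1.2 p.1.1.2
      index_eq := (index_hermiteLattice (factors h.1.1).1 (factors h.1.1).2).trans h.1.1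
      isStarLattice := (isStarLattice_hermiteLattice_iff (factors h.1.1).1 h.2.1).2 h.2.2 }
  refine ⟨Equiv.ofBijective toLattice ⟨?_, ?_⟩, fun _ => rfl⟩
  · rintro ⟨⟨⟨a, d⟩, b⟩, hp⟩ ⟨⟨⟨a', d'⟩, b'⟩, hp'⟩ eq
    have h := mem_torusParams.1 hp
    have h' := mem_torusParams.1 hp'
    obtain ⟨rfl, rfl, rfl⟩ := hermiteLattice_injective (factors h.1.1).1 (factors h'.1.1).1 h.2.1
      h'.2.1 (TorusLattice.ext_iff.1 eq)
    rfl
  · rintro ⟨L, index, star⟩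
    obtain ⟨a, b, d, had, hb, rfl⟩ := exists_eq_hermiteLattice hn index
    exact ⟨⟨⟨(a, d), b⟩, mem_torusParams.2 ⟨⟨had, hn⟩, hb,
      (isStarLattice_hermiteLattice_iff (factors had).1 hb).1 star⟩⟩, rfl⟩

open Classical in
lemma sum_card_stabilizer (G X : Type*) [Group G] [Fintype G] [MulAction G X] [Fintype X] :
    ∑ x : X, #{g : G | g • x = x} =
      Nat.card (MulAction.orbitRel.Quotient G X) * Fintype.card G := by
  have card_fixedBy (g : G) : Fintype.card (MulAction.fixedBy X g) = #{x : X | g • x = x} :=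
    Fintype.card_subtype _
  rw [Nat.card_eq_fintype_card, ← MulAction.sum_card_fixedBy_eq_card_orbits_mul_card_group]
  simp only [card_fixedBy, card_filter]
  exact sum_comm

lemma card_orbits_mul_twelve {n : ℕ} (hn : n ≠ 0) :
    Nat.card (MulAction.orbitRel.Quotient (DihedralGroup 6) (TorusLattice n)) * 12 =
      ∑ p ∈ torusParams n, hermiteStabilizerCard p.1.1 p.2 p.1.2 := by
  classical
  obtain ⟨e, lattice_eq⟩ := exists_equiv_torusParams n hn
  have := Fintype.ofEquiv _ e
  rw [show 12 = Fintype.card (DihedralGroup 6) from rfl, ← sum_card_stabilizer, ← e.sum_comp,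
    ← sum_coe_sort (torusParams n)]
  refine sum_congr rfl fun ⟨⟨(a, d), b⟩, hp⟩ _ => ?_
  obtain ⟨ha, hd⟩ := mul_ne_zero_iff.1 ((mem_torusParams.1 hp).1.1 ▸ hn)
  simp only [TorusLattice.ext_iff, TorusLattice.lattice_smul, lattice_eq]
  exact card_stabilizer_hermiteLattice ha hd

lemma sum_hermiteStabilizerCard :
    ∑ n ∈ Icc 4 100, ∑ p ∈ torusParams n, hermiteStabilizerCard p.1.1 p.2 p.1.2 = 1357 * 12 := by
  decide +kernel

theorem sum_numClasses_torus :
    ∑ n ∈ Icc 4 100, numClasses n (fun S => IsCombSurface n S ∧ IsEquivelar n S ∧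
      IsOrientable S ∧ eulerChar n S = 0) = 1357 := by
  refine Nat.eq_of_mul_eq_mul_right (show 0 < 12 by decide) ?_
  rw [sum_mul, ← sum_hermiteStabilizerCard]
  refine sum_congr rfl fun n hn => ?_
  have hn : n ≠ 0 := by have := (mem_Icc.1 hn).1; omega
  rw [numClasses_torus hn, card_orbits_mul_twelve hn]

end CountTori

/-! ### Models of Klein bottles -/

section KleinModel

variable (s : ℤˣ) (c d : ℕ)

/-- The reflection `(x, y) ↦ (s * y, s * x)`: for `s = 1` its axis is parallel to an altitude of a
lattice triangle, for `s = -1` to an edge of the lattice. Up to conjugation these are all the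
reflections in the point group. -/
def axisReflection : DihedralGroup 6 := if s = 1 then .sr 5 else .sr 2

/-- The coordinate along the axis of `axisReflection s`. -/
def axisHeight : ℤ × ℤ →+ ℤ := AddMonoidHom.fst ℤ ℤ + (s : ℤ) • AddMonoidHom.snd ℤ ℤ

/-- The lattice spanned by the vector `(c, s * c)` along the axis of `axisReflection s` and the
vector `(-d, s * d)` perpendicular to it. -/
def kleinLattice : AddSubgroup (ℤ × ℤ) :=
  AddSubgroup.closure {((c : ℤ), (s * c : ℤ)), (-(d : ℤ), (s * d : ℤ))}

/-- The glide reflection along the axis of `axisReflection s` by half the vector `(c, s * c)`. -/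
def kleinGlide (z : ℤ × ℤ) : ℤ × ℤ := ((c : ℤ), (0 : ℤ)) + axisReflection s • z

/-- Equivalence modulo `kleinLattice s c d` and `kleinGlide s c`: the classes are the vertices of a
triangulated Klein bottle. -/
def KleinRel (z w : ℤ × ℤ) : Prop :=
  w - z ∈ kleinLattice s c d ∨ w - kleinGlide s c z ∈ kleinLattice s c d

variable {s c d} {z w : ℤ × ℤ}

lemma axisReflection_smul (s : ℤˣ) (z : ℤ × ℤ) :
    axisReflection s • z = ((s * z.2 : ℤ), (s * z.1 : ℤ)) := by
  have directions : ∀ s : ℤˣ, hexDir (axisReflection s • 0) = (0, (s : ℤ)) ∧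
      hexDir (axisReflection s • 1) = ((s : ℤ), 0) := by decide
  rw [smul_lattice_def, (directions s).1, (directions s).2]
  ext <;> simp [mul_comm]

lemma axisHeight_apply (s : ℤˣ) (z : ℤ × ℤ) : axisHeight s z = z.1 + s * z.2 := rfl

lemma axisHeight_axisReflection_smul (s : ℤˣ) (z : ℤ × ℤ) :
    axisHeight s (axisReflection s • z) = axisHeight s z := by
  rw [axisReflection_smul, axisHeight_apply, axisHeight_apply, ← mul_assoc,
    Int.units_coe_mul_self, one_mul, add_comm]

lemma add_axisReflection_smul (s : ℤˣ) (z : ℤ × ℤ) :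
    z + axisReflection s • z = (axisHeight s z, s * axisHeight s z) := by
  rw [axisReflection_smul, axisHeight_apply, mul_add, ← mul_assoc, Int.units_coe_mul_self, one_mul,
    add_comm (s * z.1 : ℤ)]
  rfl

lemma eq_of_axisHeight_eq_zero (hz : axisHeight s z = 0) : z = (-(s * z.2), s * (s * z.2)) := by
  rw [axisHeight_apply] at hz
  rw [← mul_assoc, Int.units_coe_mul_self, one_mul, ← eq_neg_of_add_eq_zero_left hz]

lemma mem_kleinLattice :
    z ∈ kleinLattice s c d ↔ ∃ p : ℤ, axisHeight s z = 2 * (c * p) ∧ (d : ℤ) ∣ s * z.2 - c * p := by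
  obtain ⟨x, y⟩ := z
  simp only [kleinLattice, AddSubgroup.mem_closure_pair, Prod.smul_mk, Prod.mk_add_mk,
    Prod.mk.injEq, smul_eq_mul, axisHeight_apply]
  have hs := Int.units_coe_mul_self s
  refine exists_congr fun p => ⟨?_, ?_⟩
  · rintro ⟨q, rfl, rfl⟩
    exact ⟨by linear_combination (p * c + q * d) * hs,
      q, by linear_combination (p * c + q * d) * hs⟩
  · rintro ⟨height, q, hq⟩
    exact ⟨q, by linear_combination -height + hq,
      by linear_combination (-s : ℤ) * hq + y * hs⟩

lemma axisReflection_smul_mem_kleinLattice (hz : z ∈ kleinLattice s c d) :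
    axisReflection s • z ∈ kleinLattice s c d := by
  obtain ⟨p, height, q, hq⟩ := mem_kleinLattice.1 hz
  refine mem_kleinLattice.2 ⟨p, (axisHeight_axisReflection_smul s z).trans height, -q, ?_⟩
  rw [axisHeight_apply] at height
  rw [axisReflection_smul]
  linear_combination z.1 * Int.units_coe_mul_self s + height - hq

lemma kleinGlide_add (z u : ℤ × ℤ) :
    kleinGlide s c (z + u) = kleinGlide s c z + axisReflection s • u := by
  rw [kleinGlide, kleinGlide, smul_add, add_assoc]

lemma kleinGlide_sub_kleinGlide (z w : ℤ × ℤ) :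
    kleinGlide s c z - kleinGlide s c w = axisReflection s • (z - w) := by
  rw [kleinGlide, kleinGlide, add_sub_add_left_eq_sub, smul_sub]

lemma kleinGlide_kleinGlide (z : ℤ × ℤ) :
    kleinGlide s c (kleinGlide s c z) = ((c : ℤ), (s * c : ℤ)) + z := by
  have hs := Int.units_coe_mul_self s
  simp only [kleinGlide, axisReflection_smul]
  ext
  · simp only [Prod.fst_add, Prod.snd_add]
    linear_combination z.1 * hs
  · simp only [Prod.fst_add, Prod.snd_add]
    linear_combination z.2 * hs

lemma kleinRel_equivalence (s : ℤˣ) (c d : ℕ) : Equivalence (KleinRel s c d) := by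
  have square_mem : ((c : ℤ), (s * c : ℤ)) ∈ kleinLattice s c d :=
    AddSubgroup.subset_closure (Set.mem_insert _ _)
  have glide_mem {z w : ℤ × ℤ} (h : z - w ∈ kleinLattice s c d) :
      kleinGlide s c z - kleinGlide s c w ∈ kleinLattice s c d := by
    rw [kleinGlide_sub_kleinGlide]
    exact axisReflection_smul_mem_kleinLattice h
  have glide_glide_mem {z w : ℤ × ℤ} (h : w - kleinGlide s c z ∈ kleinLattice s c d) :
      kleinGlide s c w - z ∈ kleinLattice s c d := by
    have := add_mem (glide_mem h) square_mem
    rwa [kleinGlide_kleinGlide, ← sub_sub, sub_right_comm, sub_add_cancel] at this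
  refine ⟨fun z => .inl (by rw [sub_self]; exact zero_mem _), ?_, ?_⟩
  · rintro z w (h | h)
    · exact .inl (neg_sub w z ▸ neg_mem h)
    · exact .inr (neg_sub (kleinGlide s c w) z ▸ neg_mem (glide_glide_mem h))
  · rintro z w v (hzw | hzw) (hwv | hwv)
    · exact .inl (sub_add_sub_cancel v w z ▸ add_mem hwv hzw)
    · exact .inr (sub_add_sub_cancel v _ (kleinGlide s c z) ▸ add_mem hwv (glide_mem hzw))
    · exact .inr (sub_add_sub_cancel v w _ ▸ add_mem hwv hzw)
    · exact .inl (sub_add_sub_cancel v _ z ▸ add_mem hwv (glide_glide_mem hzw))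

lemma axisHeight_kleinGlide (z : ℤ × ℤ) :
    axisHeight s (kleinGlide s c z) = c + axisHeight s z := by
  rw [kleinGlide, map_add, axisHeight_axisReflection_smul, axisHeight_apply s (_, _), mul_zero,
    add_zero]

lemma kleinRel_iff : KleinRel s c d z w ↔ ∃ p : ℤ,
    (axisHeight s w - axisHeight s z = 2 * (c * p) ∧ (d : ℤ) ∣ s * (w.2 - z.2) - c * p) ∨
    (axisHeight s w - axisHeight s z = c * (2 * p + 1) ∧ (d : ℤ) ∣ s * w.2 - z.1 - c * p) := by
  have glide_snd : s * (w - kleinGlide s c z).2 = s * w.2 - z.1 := by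
    rw [kleinGlide, axisReflection_smul, Prod.snd_sub, Prod.snd_add]
    linear_combination (-z.1) * Int.units_coe_mul_self s
  rw [KleinRel, mem_kleinLattice, mem_kleinLattice, glide_snd, map_sub, map_sub,
    axisHeight_kleinGlide, ← exists_or]
  refine exists_congr fun p => or_congr Iff.rfl (and_congr_left' ?_)
  constructor <;> intro h <;> linear_combination h

/-- The parameters for which `KleinRel s c d` separates the vertices of every star. -/
def IsKleinParam (s : ℤˣ) (c d : ℕ) : Prop := 3 - (s : ℤ) < c ∧ 3 + (s : ℤ) < 2 * d

variable {V : Type*} {φ : ℤ × ℤ → V}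

lemma axisHeight_sub_mul (s : ℤˣ) (x t : ℤ) : axisHeight s (x - t, s * t) = x := by
  rw [axisHeight_apply]
  linear_combination t * Int.units_coe_mul_self s

lemma kleinRel_iff_of_abs_lt (h : |axisHeight s w - axisHeight s z| < c) :
    KleinRel s c d z w ↔
      axisHeight s w - axisHeight s z = 0 ∧ (d : ℤ) ∣ s * (w.2 - z.2) := by
  have hc : (c : ℤ) ≠ 0 := ((abs_nonneg _).trans_lt h).ne'
  rw [kleinRel_iff]
  constructor
  · rintro ⟨p, ⟨height, transverse⟩ | ⟨height, -⟩⟩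
    · have height_zero := Int.eq_zero_of_abs_lt_dvd ⟨2 * p, by linear_combination height⟩ h
      have hp : c * p = 0 := by omega
      exact ⟨height_zero, by rwa [hp, sub_zero] at transverse⟩
    · rw [Int.eq_zero_of_abs_lt_dvd ⟨_, height⟩ h, eq_comm, mul_eq_zero] at height
      have := height.resolve_left hc
      omega
  · rintro ⟨height, transverse⟩
    exact ⟨0, .inl ⟨by rw [height, mul_zero, mul_zero], by rwa [mul_zero, sub_zero]⟩⟩

lemma kleinRel_sub_mul_iff {x x' : Fin c} {t t' : ℤ} :
    KleinRel s c d (x - t, s * t) (x' - t', s * t') ↔ x = x' ∧ (d : ℤ) ∣ t' - t := by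
  have height_lt : |(x' : ℤ) - x| < c := abs_sub_lt_iff.2 (by omega)
  rw [kleinRel_iff_of_abs_lt (by rwa [axisHeight_sub_mul, axisHeight_sub_mul]), axisHeight_sub_mul,
    axisHeight_sub_mul, ← mul_sub, ← mul_assoc, Int.units_coe_mul_self, one_mul]
  refine and_congr_left' ?_
  rw [sub_eq_zero, eq_comm, Int.natCast_inj, Fin.val_inj]

lemma exists_kleinRel_sub_mul (hc : c ≠ 0) (z : ℤ × ℤ) :
    ∃ (x : Fin c) (t : ℤ), KleinRel s c d (x - t, s * t) z := by
  have hs := Int.units_coe_mul_self s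
  set k := axisHeight s z / c
  have hc' : (0 : ℤ) < c := by omega
  have division : axisHeight s z % c + c * k = axisHeight s z := Int.emod_add_mul_ediv _ _
  have nonneg := Int.emod_nonneg (axisHeight s z) hc'.ne'
  lift axisHeight s z % c to ℕ using nonneg with x hx
  have hx : x < c := by exact_mod_cast hx ▸ Int.emod_lt_of_pos _ hc'
  refine ⟨⟨x, hx⟩, ?_⟩
  simp only [kleinRel_iff, axisHeight_sub_mul]
  rcases Int.even_or_odd' k with ⟨p, hp | hp⟩ <;> rw [hp] at division
  · exact ⟨s * z.2 - c * p, p, .inl ⟨by linear_combination -division,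
      0, by linear_combination (c * p - s * z.2) * hs⟩⟩
  · exact ⟨c * p + x - s * z.2, p, .inr ⟨by linear_combination -division, 0, by ring⟩⟩

variable {V : Type*} {φ : ℤ × ℤ → V}

lemma natCard_of_kleinRel (hc : c ≠ 0) (surjective : Function.Surjective φ)
    (eq_iff : ∀ z w, φ z = φ w ↔ KleinRel s c d z w) : Nat.card V = c * d := by
  have cast_eq_iff (t t' : ℤ) : (d : ℤ) ∣ t' - t ↔ (t : ZMod d) = t' := by
    rw [ZMod.intCast_eq_intCast_iff, Int.modEq_iff_dvd]
  let f (x : Fin c × ZMod d) : V := φ (x.1 - x.2.cast, s * x.2.cast)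
  have bijective : Function.Bijective f := by
    constructor
    · rintro ⟨x, t⟩ ⟨x', t'⟩ h
      rw [eq_iff, kleinRel_sub_mul_iff, cast_eq_iff] at h
      simpa using h
    · intro v
      obtain ⟨z, rfl⟩ := surjective v
      obtain ⟨x, t, hz⟩ := exists_kleinRel_sub_mul (s := s) (d := d) hc z
      refine ⟨(x, t), ?_⟩
      rw [← (eq_iff _ _).2 hz, eq_iff, kleinRel_sub_mul_iff, cast_eq_iff]
      simp
  rw [← Nat.card_eq_of_bijective f bijective, Nat.card_prod, Nat.card_fin, Nat.card_zmod]

lemma starInjective_of_kleinRel (valid : IsKleinParam s c d)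
    (kleinRel_of_eq : ∀ z w, φ z = φ w → KleinRel s c d z w) : StarInjective φ := by
  have height_bound : ∀ (s : ℤˣ) (i j : ZMod 6),
      |axisHeight s (hexDir j) - axisHeight s (hexDir i)| ≤ 3 - s := by decide
  have transverse_bound : ∀ (s : ℤˣ) (i j : ZMod 6),
      axisHeight s (hexDir j) - axisHeight s (hexDir i) = 0 →
        2 * |s * ((hexDir j).2 - (hexDir i).2)| ≤ 3 + s := by decide
  intro z i j h
  have h := kleinRel_of_eq _ _ h
  rw [kleinRel_iff_of_abs_lt] at h <;>
    simp only [map_add, add_sub_add_left_eq_sub, Prod.snd_add] at h ⊢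
  · obtain ⟨height, transverse⟩ := h
    have transverse_lt : |s * ((hexDir j).2 - (hexDir i).2)| < d := by
      linarith [transverse_bound s i j height, valid.2]
    have transverse := Int.eq_zero_of_abs_lt_dvd transverse transverse_lt
    rw [← map_sub] at height
    have := eq_of_axisHeight_eq_zero height
    rw [Prod.snd_sub, transverse, mul_zero, neg_zero, Prod.mk_zero_zero, sub_eq_zero] at this
    exact (hexDir_injective this).symm
  · exact (height_bound s i j).trans_lt valid.1

section Fibres

variable (eq_iff : ∀ z w, φ z = φ w ↔ KleinRel s c d z w)
include eq_iff

lemma apply_add_eq_of_sub_mem_kleinLattice (h : w - z ∈ kleinLattice s c d) (u : ℤ × ℤ) :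
    φ (w + u) = φ (z + u) :=
  ((eq_iff _ _).2 (.inl (by rwa [add_sub_add_right_eq_sub]))).symm

lemma apply_kleinGlide (z : ℤ × ℤ) : φ (kleinGlide s c z) = φ z :=
  ((eq_iff _ _).2 (.inr (by rw [sub_self]; exact zero_mem _))).symm

lemma isHexCover_of_kleinRel (surjective : Function.Surjective φ) (valid : IsKleinParam s c d) :
    IsHexCover φ where
  surjective := surjective
  starInjective := starInjective_of_kleinRel valid fun z w => (eq_iff z w).1
  exists_smul z w h := by
    rcases (eq_iff z w).1 h with h | h
    · exact ⟨1, fun u => by rw [one_smul, apply_add_eq_of_sub_mem_kleinLattice eq_iff h]⟩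
    · exact ⟨axisReflection s, fun u => by
        rw [apply_add_eq_of_sub_mem_kleinLattice eq_iff h, ← kleinGlide_add,
          apply_kleinGlide eq_iff]⟩

lemma isKleinParam_of_starInjective (hc : c ≠ 0) (hd : d ≠ 0) (hφ : StarInjective φ) :
    IsKleinParam s c d := by
  have sign_bounds : ∀ s : ℤˣ, -1 ≤ (s : ℤ) ∧ (s : ℤ) ≤ 1 := by decide
  have glide_difference : ∀ s : ℤˣ, ∀ c ∈ Icc (1 : ℤ) 4, c ≤ 3 - s →
      ∃ i j, i ≠ j ∧ (c - c / 2, s * (c / 2)) = hexDir j - hexDir i := by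
    decide
  have transverse_difference : ∀ s : ℤˣ, ∀ d ∈ Icc (1 : ℤ) 2, 2 * d ≤ 3 + s →
      ∃ i j, i ≠ j ∧ (-d, s * d) = hexDir j - hexDir i := by
    decide
  have apply_add_ne (z : ℤ × ℤ) {v : ℤ × ℤ} (hv : ∃ i j, i ≠ j ∧ v = hexDir j - hexDir i) :
      φ (v + z) ≠ φ z := by
    obtain ⟨i, j, hij, rfl⟩ := hv
    refine fun h => hij (hφ (z - hexDir i) _ _ ?_)
    rw [sub_add_cancel, ← h]
    congr 1
    abel
  refine ⟨lt_of_not_ge fun h => ?_, lt_of_not_ge fun h => ?_⟩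
  · have small : (c : ℤ) ∈ Icc 1 4 := mem_Icc.2 (by have := sign_bounds s; omega)
    refine apply_add_ne ((c : ℤ) / 2, 0) (glide_difference s c small h) ?_
    rw [← apply_kleinGlide eq_iff ((c : ℤ) / 2, 0), kleinGlide, axisReflection_smul]
    simp
  · have small : (d : ℤ) ∈ Icc 1 2 := mem_Icc.2 (by have := sign_bounds s; omega)
    refine apply_add_ne 0 (transverse_difference s d small h) ?_
    rw [← zero_add (0 : ℤ × ℤ), ← add_assoc]
    refine apply_add_eq_of_sub_mem_kleinLattice eq_iff ?_ 0
    rw [add_sub_cancel_right]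
    exact AddSubgroup.subset_closure (by simp)

end Fibres

end KleinModel

/-! ### Classification of Klein bottles -/

section Klein

variable {V W : Type*} {φ : ℤ × ℤ → V} {ψ : ℤ × ℤ → W} {s s' : ℤˣ} {c c' d d' : ℕ}

lemma StarInjective.smul_injective (hφ : StarInjective φ) {x : ℤ × ℤ} {g g' : DihedralGroup 6}
    (h : ∀ u, φ (x + g • u) = φ (x + g' • u)) : g = g' := by
  have faithful : ∀ g g' : DihedralGroup 6, (∀ i : ZMod 6, g • i = g' • i) → g = g' := by decide
  refine faithful g g' fun i => hφ x _ _ ?_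
  rw [← smul_hexDir, ← smul_hexDir, h]

lemma axisReflection_ne_one : ∀ s, axisReflection s ≠ 1 := by decide

lemma HexEquiv.symm (h : HexEquiv φ ψ) : HexEquiv ψ φ := by
  obtain ⟨w, e, h⟩ := h
  refine ⟨-(e⁻¹ • w), e⁻¹, fun x y => ?_⟩
  rw [h, neg_add_eq_sub, neg_add_eq_sub, ← smul_sub, ← smul_sub, smul_inv_smul, smul_inv_smul,
    add_sub_cancel, add_sub_cancel]

lemma eq_and_dvd_of_hexEquiv (hψ : StarInjective ψ)
    (hφ : ∀ z w, φ z = φ w ↔ KleinRel s c d z w)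
    (hψ' : ∀ z w, ψ z = ψ w ↔ KleinRel s' c' d' z w) (h : HexEquiv φ ψ) : s = s' ∧ c' ∣ c := by
  obtain ⟨w, e, h⟩ := h
  set y := w + e • ((c : ℤ), (0 : ℤ)) with hy
  have conjugate (v : ℤ × ℤ) : ψ (y + (e * axisReflection s * e⁻¹) • v) = ψ (w + v) := by
    have := (h _ _).1 (apply_kleinGlide hφ (e⁻¹ • v))
    rwa [kleinGlide, smul_add, smul_inv_smul, smul_smul, smul_smul, ← add_assoc] at this
  have related : KleinRel s' c' d' w y := (hψ' _ _).1 (by simpa using (conjugate 0).symm)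
  rcases related with hy' | hy'
  · have eq_one : e * axisReflection s * e⁻¹ = 1 := hψ.smul_injective fun v => by
      rw [conjugate, one_smul, apply_add_eq_of_sub_mem_kleinLattice hψ' hy']
    exact absurd (conj_eq_one_iff.1 eq_one) (axisReflection_ne_one s)
  · have eq_axisReflection : e * axisReflection s * e⁻¹ = axisReflection s' :=
      hψ.smul_injective fun v => by
        rw [conjugate, apply_add_eq_of_sub_mem_kleinLattice hψ' hy', ← kleinGlide_add,
          apply_kleinGlide hψ']
    have commutes : ∀ (s s' : ℤˣ) (e : DihedralGroup 6),
        e * axisReflection s * e⁻¹ = axisReflection s' →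
          s = s' ∧ (axisHeight s (e • (1, 0)) = 1 ∨ axisHeight s (e • (1, 0)) = -1) := by decide
    obtain ⟨rfl, height_unit⟩ := commutes s s' e eq_axisReflection
    obtain ⟨p, height, -⟩ := mem_kleinLattice.1 hy'
    have height_smul :
        axisHeight s (e • ((c : ℤ), (0 : ℤ))) = c * axisHeight s (e • ((1 : ℤ), (0 : ℤ))) := by
      rw [show ((c : ℤ), (0 : ℤ)) = c • (1, 0) by simp, smul_comm, map_nsmul, nsmul_eq_mul]
    rw [map_sub, axisHeight_kleinGlide, hy, map_add, height_smul] at height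
    refine ⟨rfl, Int.natCast_dvd_natCast.1 ?_⟩
    rcases height_unit with unit | unit <;> rw [unit] at height
    · exact ⟨2 * p + 1, by linear_combination height⟩
    · exact ⟨-(2 * p + 1), by linear_combination -height⟩

lemma IsHexCover.comp_affine (hφ : IsHexCover φ) (v : ℤ × ℤ) (e : DihedralGroup 6) :
    IsHexCover fun u => φ (v + e • u) where
  surjective := hφ.surjective.comp (surjective_affine v e)
  starInjective z i j h := by
    simp only [smul_add, smul_hexDir, ← add_assoc] at h
    exact MulAction.injective e (hφ.starInjective _ _ _ h)
  exists_smul z w h := by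
    obtain ⟨g, hg⟩ := hφ.exists_smul _ _ h
    refine ⟨e⁻¹ * g * e, fun u => ?_⟩
    simp only [smul_add, ← add_assoc, hg, mul_smul, smul_inv_smul]

lemma exists_conj_axisReflection : ∀ i : ZMod 6, ∃ (e : DihedralGroup 6) (s : ℤˣ),
    DihedralGroup.sr i = e * axisReflection s * e⁻¹ := by decide

section Deck

variable {g u t : ℤ × ℤ} {δ δ' : DihedralGroup 6}

lemma IsDeck.mul (h : IsDeck φ g δ) (h' : IsDeck φ u δ') : IsDeck φ (g + δ • u) (δ * δ') :=
  fun z => by rw [mul_smul, add_assoc, ← smul_add, h, h']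

lemma IsDeck.sub_mem_translationLattice (hg : IsDeck φ g δ) (hu : IsDeck φ u δ) :
    u - g ∈ translationLattice φ := fun z => by
  have := (hu (δ⁻¹ • (z - g))).trans (hg _).symm
  rw [smul_inv_smul, add_sub_cancel] at this
  rw [← this]
  congr 1
  abel

lemma IsDeck.add (hg : IsDeck φ g δ) (ht : t ∈ translationLattice φ) : IsDeck φ (g + t) δ :=
  fun z => by rw [add_right_comm, mem_translationLattice.1 ht, hg]

lemma IsDeck.smul_mem_translationLattice (hg : IsDeck φ g δ) (ht : t ∈ translationLattice φ) :
    δ • t ∈ translationLattice φ := fun z => by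
  obtain ⟨y, rfl⟩ := surjective_affine g δ z
  rw [add_assoc, ← smul_add, hg, mem_translationLattice.1 ht, hg]

lemma IsHexCover.eq_iff_of_isDeck_axisReflection (hφ : IsHexCover φ)
    (hg : IsDeck φ g (axisReflection s)) (z w : ℤ × ℤ) :
    φ z = φ w ↔ w - z ∈ translationLattice φ ∨
      w - (g + axisReflection s • z) ∈ translationLattice φ := by
  have rotation_or_eq : ∀ (s : ℤˣ) (i : ZMod 6),
      ∃ j, DihedralGroup.sr i * axisReflection s = .r j ∧
        (j = 0 → DihedralGroup.sr i = axisReflection s) := by decide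
  constructor
  · intro h
    obtain ⟨u, i | i, hu, rfl⟩ := hφ.exists_isDeck h
    · obtain rfl := hφ.starInjective.rotation_eq_zero hu
      left
      rwa [← DihedralGroup.one_def, one_smul, add_sub_cancel_right, ← isDeck_r_zero_iff]
    · obtain ⟨j, product, eq_of_zero⟩ := rotation_or_eq s i
      have := hφ.starInjective.rotation_eq_zero (product ▸ hu.mul hg)
      rw [eq_of_zero this] at hu ⊢
      right
      rw [add_sub_add_right_eq_sub]
      exact hg.sub_mem_translationLattice hu
  · rintro (h | h)
    · rw [← mem_translationLattice.1 h z, add_sub_cancel]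
    · rw [← hg z, ← mem_translationLattice.1 h (g + _), add_sub_cancel]

lemma add_axisReflection_smul_snd (s : ℤˣ) (g : ℤ × ℤ) :
    g + axisReflection s • (0, g.2) = (axisHeight s g, 0) + (0, g.2) := by
  rw [axisReflection_smul, axisHeight_apply]
  ext <;> simp

lemma StarInjective.axisHeight_ne_zero (hφ : StarInjective φ)
    (hg : IsDeck φ g (axisReflection s)) : axisHeight s g ≠ 0 := by
  intro height
  have fixed : g + axisReflection s • (0, g.2) = (0, g.2) := by
    rw [add_axisReflection_smul_snd, height, Prod.mk_zero_zero, zero_add]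
  refine axisReflection_ne_one s (hφ.smul_injective (x := (0, g.2)) fun z => ?_)
  rw [one_smul, ← hg ((0, g.2) + z), smul_add, ← add_assoc, fixed]

lemma IsDeck.axisHeight_mem (hg : IsDeck φ g (axisReflection s)) :
    (axisHeight s g, s * axisHeight s g) ∈ translationLattice φ := by
  have involutive : ∀ s, axisReflection s * axisReflection s = .r 0 := by decide
  rw [← add_axisReflection_smul, ← isDeck_r_zero_iff, ← involutive s]
  exact hg.mul hg

lemma IsDeck.axisHeight_mem_of_mem (hg : IsDeck φ g (axisReflection s))
    (ht : t ∈ translationLattice φ) :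
    (axisHeight s t, s * axisHeight s t) ∈ translationLattice φ := by
  rw [← add_axisReflection_smul]
  exact add_mem ht (hg.smul_mem_translationLattice ht)

lemma axisHeight_along (s : ℤˣ) (x : ℤ) : axisHeight s (x, s * x) = 2 * x := by
  rw [axisHeight_apply]
  linear_combination x * Int.units_coe_mul_self s

lemma StarInjective.exists_minimal_glide (hφ : StarInjective φ)
    (hg : IsDeck φ g (axisReflection s)) :
    ∃ c : ℕ, c ≠ 0 ∧ (∀ x : ℤ, (x, s * x) ∈ translationLattice φ ↔ (c : ℤ) ∣ x) ∧
      ∃ u, axisHeight s u = c ∧ IsDeck φ u (axisReflection s) := by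
  obtain ⟨c, hc⟩ := exists_nat_mem_iff_dvd ((translationLattice φ).comap
    ((AddMonoidHom.id ℤ).prod (AddMonoidHom.mulLeft (s : ℤ))))
  replace hc (x : ℤ) : (x, s * x) ∈ translationLattice φ ↔ (c : ℤ) ∣ x := hc x
  have height_ne := hφ.axisHeight_ne_zero hg
  obtain ⟨k, hk⟩ := (hc _).1 hg.axisHeight_mem
  refine ⟨c, by rintro rfl; simp [hk] at height_ne, hc, ?_⟩
  have shift (j : ℤ) : IsDeck φ (g + ((c * -j : ℤ), (s * (c * -j) : ℤ))) (axisReflection s) :=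
    hg.add ((hc _).2 ⟨-j, rfl⟩)
  have height_shift (j : ℤ) : axisHeight s (g + ((c * -j : ℤ), (s * (c * -j) : ℤ))) =
      c * (k - 2 * j) := by
    rw [map_add, axisHeight_along, hk]
    ring
  obtain ⟨j, rfl | rfl⟩ := Int.even_or_odd' k
  · exact absurd ((height_shift j).trans (by ring)) (hφ.axisHeight_ne_zero (shift j))
  · exact ⟨_, (height_shift j).trans (by ring), shift j⟩

lemma StarInjective.exists_translationLattice_eq (hφ : StarInjective φ)
    (hc : ∀ x : ℤ, (x, s * x) ∈ translationLattice φ ↔ (c : ℤ) ∣ x)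
    (hg : IsDeck φ g (axisReflection s)) (height_eq : axisHeight s g = c) :
    ∃ d, translationLattice φ = kleinLattice s c d := by
  obtain ⟨d, hd⟩ := exists_nat_mem_iff_dvd ((translationLattice φ).comap
    ((-AddMonoidHom.id ℤ).prod (AddMonoidHom.mulLeft (s : ℤ))))
  replace hd (x : ℤ) : (-x, s * x) ∈ translationLattice φ ↔ (d : ℤ) ∣ x := hd x
  refine ⟨d, AddSubgroup.ext fun z => ?_⟩
  have along_mem (j : ℤ) : ((c * j : ℤ), (s * (c * j) : ℤ)) ∈ translationLattice φ :=
    (hc _).2 ⟨j, rfl⟩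
  have mem_iff {j : ℤ} (height : axisHeight s z = 2 * (c * j)) :
      z ∈ translationLattice φ ↔ (d : ℤ) ∣ s * z.2 - c * j := by
    have height_zero : axisHeight s (z - ((c * j : ℤ), (s * (c * j) : ℤ))) = 0 := by
      rw [map_sub, height, axisHeight_along, sub_self]
    have transverse : s * (z - ((c * j : ℤ), (s * (c * j) : ℤ))).2 = s * z.2 - c * j := by
      rw [Prod.snd_sub]
      linear_combination (-(c * j)) * Int.units_coe_mul_self s
    have across := eq_of_axisHeight_eq_zero height_zero
    rw [transverse] at across
    rw [← hd, ← across, sub_eq_add_neg, AddSubgroup.add_mem_cancel_right _ (neg_mem (along_mem j))]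
  rw [mem_kleinLattice]
  constructor
  · intro hz
    obtain ⟨k, hk⟩ := (hc _).1 (hg.axisHeight_mem_of_mem hz)
    obtain ⟨j, rfl | rfl⟩ := Int.even_or_odd' k
    · have height : axisHeight s z = 2 * (c * j) := hk.trans (by ring)
      exact ⟨j, height, (mem_iff height).1 hz⟩
    · refine absurd ?_ (hφ.axisHeight_ne_zero (hg.add (add_mem (neg_mem hz) (along_mem j))))
      rw [map_add, map_add, map_neg, axisHeight_along, height_eq, hk]
      ring
  · rintro ⟨j, height, dvd⟩
    exact (mem_iff height).2 dvd

end Deck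

lemma IsHexCover.exists_kleinRel (hφ : IsHexCover φ) {t : ℤ × ℤ} {i : ZMod 6}
    (deck : IsDeck φ t (.sr i)) :
    ∃ (v : ℤ × ℤ) (e : DihedralGroup 6) (s : ℤˣ) (c d : ℕ), c ≠ 0 ∧
      ∀ x y, φ (v + e • x) = φ (v + e • y) ↔ KleinRel s c d x y := by
  obtain ⟨e, s, he⟩ := exists_conj_axisReflection i
  have cover : IsHexCover fun u => φ (e • u) := by simpa only [zero_add] using hφ.comp_affine 0 e
  have glide : IsDeck (fun u => φ (e • u)) (e⁻¹ • t) (axisReflection s) := fun u => by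
    have := deck (e • u)
    rw [he, mul_smul, mul_smul, inv_smul_smul] at this
    simpa only [smul_add, smul_inv_smul] using this
  obtain ⟨c, hc, along_iff, g, height, hg⟩ := cover.starInjective.exists_minimal_glide glide
  obtain ⟨d, lattice_eq⟩ := cover.starInjective.exists_translationLattice_eq along_iff hg height
  refine ⟨e • (0, g.2), e, s, c, d, hc, fun x y => ?_⟩
  have := cover.eq_iff_of_isDeck_axisReflection hg ((0, g.2) + x) ((0, g.2) + y)
  rw [← smul_add, ← smul_add, this, lattice_eq, add_sub_add_left_eq_sub, smul_add, ← add_assoc,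
    add_axisReflection_smul_snd, height, add_right_comm, add_comm (_ + _) (0, g.2),
    add_sub_add_left_eq_sub]
  rfl

lemma exists_surjective_fin_kleinRel (s : ℤˣ) (hc : c ≠ 0) (hd : d ≠ 0) :
    ∃ φ : ℤ × ℤ → Fin (c * d), Function.Surjective φ ∧
      ∀ z w, φ z = φ w ↔ KleinRel s c d z w := by
  let r : Setoid (ℤ × ℤ) := ⟨KleinRel s c d, kleinRel_equivalence s c d⟩
  have eq_iff (z w : ℤ × ℤ) : Quotient.mk r z = Quotient.mk r w ↔ KleinRel s c d z w :=
    Quotient.eq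
  obtain ⟨φ, surjective, hφ⟩ := exists_surjective_fin Quotient.mk_surjective
    (natCard_of_kleinRel hc Quotient.mk_surjective eq_iff) (mul_ne_zero hc hd)
  exact ⟨φ, surjective, fun z w => (hφ z w).trans (eq_iff z w)⟩

lemma hexEquiv_iff_of_kleinRel (hφ : StarInjective φ) (hψ : StarInjective ψ)
    (hφ' : ∀ z w, φ z = φ w ↔ KleinRel s c d z w)
    (hψ' : ∀ z w, ψ z = ψ w ↔ KleinRel s' c' d' z w) (card_ne : c * d ≠ 0)
    (card_eq : c * d = c' * d') : HexEquiv φ ψ ↔ (s, c, d) = (s', c', d') := by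
  constructor
  · intro h
    obtain ⟨rfl, hc⟩ := eq_and_dvd_of_hexEquiv hψ hφ' hψ' h
    obtain rfl := (eq_and_dvd_of_hexEquiv hφ hψ' hφ' h.symm).2.antisymm hc
    rw [mul_left_cancel₀ (left_ne_zero_of_mul card_ne) card_eq]
  · rintro ⟨rfl, rfl, rfl⟩
    exact ⟨0, 1, fun x y => by rw [one_smul, one_smul, zero_add, zero_add, hφ', hψ']⟩

lemma IsHexCover.not_isOrientable_of_kleinRel [Fintype V] [DecidableEq V] (hφ : IsHexCover φ)
    (eq_iff : ∀ z w, φ z = φ w ↔ KleinRel s c d z w) : ¬ IsOrientable (hexQuotient φ) := by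
  have reflection : ∀ s, ∃ i, axisReflection s = .sr i := by decide
  obtain ⟨i, hi⟩ := reflection s
  rw [hφ.isOrientable_hexQuotient_iff]
  exact fun h => h (c, 0) i (hi ▸ apply_kleinGlide eq_iff)

instance : DecidablePred fun p : ℤˣ × ℕ × ℕ => IsKleinParam p.1 p.2.1 p.2.2 :=
  fun _ => inferInstanceAs (Decidable (_ ∧ _))

/-- The parameters `(s, c, d)` of the triangulated Klein bottles with `n` vertices. -/
def kleinParams (n : ℕ) : Finset (ℤˣ × ℕ × ℕ) :=
  {p ∈ univ ×ˢ n.divisorsAntidiagonal | IsKleinParam p.1 p.2.1 p.2.2}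

lemma mem_kleinParams {n : ℕ} :
    (s, c, d) ∈ kleinParams n ↔ (c * d = n ∧ n ≠ 0) ∧ IsKleinParam s c d := by
  rw [kleinParams, mem_filter, mem_product, Nat.mem_divisorsAntidiagonal]
  simp only [mem_univ, true_and]

lemma IsHexCover.exists_hexEquiv_kleinRel {n : ℕ} {φ : ℤ × ℤ → Fin n} (hφ : IsHexCover φ)
    (hn : n ≠ 0) (nonorientable : ¬ IsOrientable (hexQuotient φ)) :
    ∃ s c d, (s, c, d) ∈ kleinParams n ∧ ∀ {ψ : ℤ × ℤ → W},
      (∀ z w, ψ z = ψ w ↔ KleinRel s c d z w) → HexEquiv φ ψ := by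
  simp only [hφ.isOrientable_hexQuotient_iff, not_forall, not_not] at nonorientable
  obtain ⟨t, i, deck⟩ := nonorientable
  obtain ⟨v, e, s, c, d, hc, eq_iff⟩ := hφ.exists_kleinRel deck
  have cover := hφ.comp_affine v e
  have card := natCard_of_kleinRel hc cover.surjective eq_iff
  rw [Nat.card_fin] at card
  have hd : d ≠ 0 := right_ne_zero_of_mul (card ▸ hn)
  refine ⟨s, c, d, mem_kleinParams.2 ⟨⟨card.symm, hn⟩,
    isKleinParam_of_starInjective eq_iff hc hd cover.starInjective⟩, fun hψ => ?_⟩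
  exact HexEquiv.symm ⟨v, e, fun x y => by rw [hψ, eq_iff]⟩

theorem numClasses_klein {n : ℕ} (hn : n ≠ 0) :
    numClasses n (fun S => IsCombSurface n S ∧ IsEquivelar n S ∧ ¬ IsOrientable S ∧
      eulerChar n S = 0) = #(kleinParams n) := by
  have exists_model (p : kleinParams n) : ∃ φ : ℤ × ℤ → Fin n, Function.Surjective φ ∧
      ∀ z w, φ z = φ w ↔ KleinRel p.1.1 p.1.2.1 p.1.2.2 z w := by
    obtain ⟨⟨s, c, d⟩, hp⟩ := p
    obtain ⟨⟨rfl, -⟩, -⟩ := mem_kleinParams.1 hp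
    exact exists_surjective_fin_kleinRel s (left_ne_zero_of_mul hn) (right_ne_zero_of_mul hn)
  choose Φ surjective eq_iff using exists_model
  have cover (p : kleinParams n) : IsHexCover (Φ p) :=
    isHexCover_of_kleinRel (eq_iff p) (surjective p) (mem_kleinParams.1 p.2).2
  have card_eq (p : kleinParams n) : p.1.2.1 * p.1.2.2 = n := (mem_kleinParams.1 p.2).1.1
  rw [numClasses_equivelar_eq_card_quotient Φ cover
    (fun p => (cover p).not_isOrientable_of_kleinRel (eq_iff p)) (fun φ hφ nonorientable => ?_)
    (⊥ : Setoid (kleinParams n)) fun p q => ?_]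
  · rw [Nat.card_congr Setoid.quotientBotEquiv, Nat.card_eq_fintype_card, Fintype.card_coe]
  · obtain ⟨s, c, d, hp, equiv⟩ := hφ.exists_hexEquiv_kleinRel hn nonorientable
    exact ⟨⟨(s, c, d), hp⟩, equiv (eq_iff _)⟩
  · rw [hexEquiv_iff_of_kleinRel (cover p).starInjective (cover q).starInjective (eq_iff p)
      (eq_iff q) ((card_eq p).symm ▸ hn) ((card_eq p).trans (card_eq q).symm), Setoid.bot_def]
    exact Subtype.ext_iff.symm

lemma sum_card_kleinParams : ∑ n ∈ Icc 4 100, #(kleinParams n) = 364 := by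
  decide +kernel

theorem sum_numClasses_klein :
    ∑ n ∈ Icc 4 100, numClasses n (fun S => IsCombSurface n S ∧ IsEquivelar n S ∧
      ¬ IsOrientable S ∧ eulerChar n S = 0) = 364 := by
  rw [← sum_card_kleinParams]
  refine sum_congr rfl fun n hn => numClasses_klein ?_
  have := (mem_Icc.1 hn).1
  omega

end Klein

/-- There are exactly 1357 equivelar triangulations of the torus (orientable,
χ = 0) and exactly 364 equivelar triangulations of the Klein bottle
(non-orientable, χ = 0) with up to 100 vertices. -/
theorem num_equivelar_torus_klein_bottle :
    (∑ n ∈ Finset.Icc 4 100, numClasses n (fun S => IsCombSurface n S ∧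
      IsEquivelar n S ∧ IsOrientable S ∧ eulerChar n S = 0)) = 1357 ∧
    (∑ n ∈ Finset.Icc 4 100, numClasses n (fun S => IsCombSurface n S ∧
      IsEquivelar n S ∧ ¬ IsOrientable S ∧ eulerChar n S = 0)) = 364 :=
  ⟨sum_numClasses_torus, sum_numClasses_klein⟩
end

section
/- There do not exist integers p ≥ 3, q ≥ 3, and n > 2p satisfying q·(p − 2)·n = 2·p·(n + 1). (This is the arithmetic statement behind the fact that there are no equivelar polyhedral maps of any type (p,q;n) on a surface of Euler characteristic −1.) -/
open Finset

/-- The hypothesis is the Euler relation `n - n * q / 2 + n * q / p = χ` of an equivelar map of type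
`{p, q}` with `n` vertices, with the denominators cleared. -/
theorem vertices_dvd_two_mul_mul_chi {R : Type*} [CommRing R] {p q n χ : R}
    (h : q * (p - 2) * n = 2 * p * (n - χ)) : n ∣ 2 * p * χ :=
  ⟨2 * p - q * (p - 2), by linear_combination h⟩

theorem abs_vertices_le_two_mul_abs_mul_abs_chi {p q n χ : ℤ} (hp : p ≠ 0) (hχ : χ ≠ 0)
    (h : q * (p - 2) * n = 2 * p * (n - χ)) : |n| ≤ 2 * |p| * |χ| := by
  have hdvd : |n| ∣ |2 * p * χ| := abs_dvd_abs _ _ |>.mpr (vertices_dvd_two_mul_mul_chi h)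
  calc |n| ≤ |2 * p * χ| := Int.le_of_dvd (by positivity) hdvd
    _ = 2 * |p| * |χ| := by rw [abs_mul, abs_mul, abs_two]

/-- There are no integers `p ≥ 3`, `q ≥ 3`, `n > 2p` with
`q·(p - 2)·n = 2·p·(n + 1)`: there are no equivelar polyhedral maps
on a surface of Euler characteristic -1. -/
theorem no_equivelar_map_chi_neg_one :
    ¬ ∃ p q n : ℤ, 3 ≤ p ∧ 3 ≤ q ∧ 2 * p < n ∧
      q * (p - 2) * n = 2 * p * (n + 1) := by
  rintro ⟨p, q, n, hp, -, hn, h⟩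
  have hle : |n| ≤ 2 * |p| * |(-1 : ℤ)| :=
    abs_vertices_le_two_mul_abs_mul_abs_chi (by lia) (by norm_num) (by rwa [sub_neg_eq_add])
  rw [abs_of_pos (by lia : 0 < n), abs_of_pos (by lia : 0 < p), abs_neg, abs_one, mul_one] at hle
  exact hn.not_ge hle
end

section
/- For every negative integer χ, the set of triples (p, q, n) of integers with p ≥ 3, q ≥ 3, n > 2p, and q·(p − 2)·n = 2·p·(n − χ) is finite. (This is the arithmetic statement behind the fact that a surface of negative Euler characteristic carries only finitely many equivelar polyhedral maps.) -/
open Finset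

/-!
The relation `q(p - 2)n = 2p(n - χ)` reads `kn = -2pχ` with `k = (p - 2)(q - 2) - 4`, so both `k`
and `n` divide `2pχ`. Hence `|k| ≤ 2|pχ|`, and since `k` grows like `pq` this bounds `q` in terms
of `χ` alone. Eliminating `p` modulo `k` gives `k ∣ 4qχ`, which bounds `k`, hence `p`; finally
`n ∣ 2pχ` bounds `n`.
-/

/-- The excess `(p - 2)(q - 2) - 4` of the Schläfli type `{p, q}`. For `p, q ≥ 3` it is negative,
zero or positive according as the regular tiling of type `{p, q}` is spherical, Euclidean or
hyperbolic. -/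
def schlafliExcess (p q : ℤ) : ℤ :=
  (p - 2) * (q - 2) - 4

/-- The double-counting relation between the Euler characteristic `χ` of a surface and the type
`{p, q}` and number `n` of vertices of an equivelar map on it, for arbitrary integer parameters. -/
def EquivelarRelation (χ p q n : ℤ) : Prop :=
  q * (p - 2) * n = 2 * p * (n - χ)

lemma abs_le_abs_of_dvd_of_ne_zero {a b : ℤ} (hab : a ∣ b) (hb : b ≠ 0) : |a| ≤ |b| :=
  Int.le_of_dvd (abs_pos.mpr hb) ((abs_dvd_abs a b).mpr hab)

lemma abs_le_abs_sub_two_add_two (a : ℤ) : |a| ≤ |a - 2| + 2 := by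
  simpa only [sub_add_cancel, abs_two] using abs_add_le (a - 2) 2

section SchlafliExcess

variable {p q χ : ℤ}

lemma schlafliExcess_dvd_four_mul (hdvd : schlafliExcess p q ∣ 2 * p * χ) :
    schlafliExcess p q ∣ 4 * q * χ := by
  have elimination : 4 * q * χ = 2 * p * χ * (q - 2) - schlafliExcess p q * (2 * χ) := by
    unfold schlafliExcess
    ring
  rw [elimination]
  exact dvd_sub (hdvd.mul_right _) (dvd_mul_right _ _)

lemma abs_sub_two_le_of_schlafliExcess_dvd (hχ : χ ≠ 0) (hp₀ : p ≠ 0) (hp₂ : p ≠ 2)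
    (hdvd : schlafliExcess p q ∣ 2 * p * χ) : |q - 2| ≤ 6 * |χ| + 4 := by
  have one_le : 1 ≤ |p - 2| := Int.one_le_abs (sub_ne_zero.mpr hp₂)
  have abs_p_le : |p| ≤ 3 * |p - 2| := by linarith [abs_le_abs_sub_two_add_two p]
  have abs_excess_le : |schlafliExcess p q| ≤ 2 * |p| * |χ| := by
    simpa only [abs_mul, abs_two] using abs_le_abs_of_dvd_of_ne_zero hdvd (by positivity)
  refine le_of_mul_le_mul_left ?_ (zero_lt_one.trans_le one_le)
  calc |p - 2| * |q - 2| = |schlafliExcess p q + 4| := by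
        rw [schlafliExcess, sub_add_cancel, abs_mul]
    _ ≤ |schlafliExcess p q| + 4 := abs_add_le _ 4
    _ ≤ 2 * |p| * |χ| + 4 := by gcongr
    _ ≤ 2 * (3 * |p - 2|) * |χ| + 4 * |p - 2| := by gcongr; linarith
    _ = |p - 2| * (6 * |χ| + 4) := by ring

lemma abs_le_of_schlafliExcess_dvd (hχ : χ ≠ 0) (hq₀ : q ≠ 0) (hq₂ : q ≠ 2)
    (hdvd : schlafliExcess p q ∣ 4 * q * χ) : |p| ≤ (4 * |χ| + 2) * |q| := by
  have abs_excess_le : |schlafliExcess p q| ≤ 4 * |q| * |χ| := by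
    simpa only [abs_mul, Nat.abs_ofNat] using abs_le_abs_of_dvd_of_ne_zero hdvd (by positivity)
  calc |p| ≤ |p| * |q - 2| :=
        le_mul_of_one_le_right (abs_nonneg p) (Int.one_le_abs (sub_ne_zero.mpr hq₂))
    _ = |schlafliExcess p q + 2 * q| := by rw [← abs_mul, schlafliExcess]; ring_nf
    _ ≤ |schlafliExcess p q| + 2 * |q| := by
        simpa only [abs_mul, abs_two] using abs_add_le (schlafliExcess p q) (2 * q)
    _ ≤ 4 * |q| * |χ| + 2 * |q| := by gcongr
    _ = (4 * |χ| + 2) * |q| := by ring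

end SchlafliExcess

namespace EquivelarRelation

variable {χ p q n : ℤ}

lemma two_mul_eq_schlafliExcess_mul_neg (h : EquivelarRelation χ p q n) :
    2 * p * χ = schlafliExcess p q * -n := by
  unfold EquivelarRelation at h
  unfold schlafliExcess
  linear_combination h

lemma schlafliExcess_dvd (h : EquivelarRelation χ p q n) : schlafliExcess p q ∣ 2 * p * χ :=
  Dvd.intro _ h.two_mul_eq_schlafliExcess_mul_neg.symm

lemma vertexCount_dvd (h : EquivelarRelation χ p q n) : n ∣ 2 * p * χ :=
  neg_dvd.mp (Dvd.intro_left _ h.two_mul_eq_schlafliExcess_mul_neg.symm)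

lemma abs_vertexDegree_le (h : EquivelarRelation χ p q n) (hχ : χ ≠ 0) (hp₀ : p ≠ 0)
    (hp₂ : p ≠ 2) : |q| ≤ 6 * |χ| + 6 := by
  linarith [abs_le_abs_sub_two_add_two q,
    abs_sub_two_le_of_schlafliExcess_dvd hχ hp₀ hp₂ h.schlafliExcess_dvd]

lemma abs_faceSize_le (h : EquivelarRelation χ p q n) (hχ : χ ≠ 0) (hq₀ : q ≠ 0)
    (hq₂ : q ≠ 2) : |p| ≤ (4 * |χ| + 2) * |q| :=
  abs_le_of_schlafliExcess_dvd hχ hq₀ hq₂ (schlafliExcess_dvd_four_mul h.schlafliExcess_dvd)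

lemma abs_vertexCount_le (h : EquivelarRelation χ p q n) (hχ : χ ≠ 0) (hp₀ : p ≠ 0) :
    |n| ≤ 2 * |p| * |χ| := by
  simpa only [abs_mul, abs_two] using abs_le_abs_of_dvd_of_ne_zero h.vertexCount_dvd (by positivity)

end EquivelarRelation

theorem equivelar_map_triples_finite_general (χ : ℤ) (hχ : χ ≠ 0) :
    {t : ℤ × ℤ × ℤ | t.1 ≠ 0 ∧ t.1 ≠ 2 ∧ t.2.1 ≠ 0 ∧ t.2.1 ≠ 2 ∧
      t.2.1 * (t.1 - 2) * t.2.2 = 2 * t.1 * (t.2.2 - χ)}.Finite := by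
  let Q := 6 * |χ| + 6
  let P := (4 * |χ| + 2) * Q
  let N := 2 * P * |χ|
  refine ((Set.finite_Icc (-P) P).prod
    ((Set.finite_Icc (-Q) Q).prod (Set.finite_Icc (-N) N))).subset ?_
  rintro ⟨p, q, n⟩ ⟨hp₀, hp₂, hq₀, hq₂, h : EquivelarRelation χ p q n⟩
  have hq : |q| ≤ Q := h.abs_vertexDegree_le hχ hp₀ hp₂
  have hp : |p| ≤ P := (h.abs_faceSize_le hχ hq₀ hq₂).trans (by unfold P; gcongr)
  have hn : |n| ≤ N := (h.abs_vertexCount_le hχ hp₀).trans (by unfold N; gcongr)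
  exact ⟨abs_le.mp hp, abs_le.mp hq, abs_le.mp hn⟩

/-- For every negative integer `χ`, there are only finitely many triples
`(p, q, n)` with `p ≥ 3`, `q ≥ 3`, `n > 2p` and `q·(p - 2)·n = 2·p·(n - χ)`:
a surface of negative Euler characteristic carries only finitely many
equivelar polyhedral maps. -/
theorem equivelar_map_triples_finite (χ : ℤ) (hχ : χ < 0) :
    {t : ℤ × ℤ × ℤ | 3 ≤ t.1 ∧ 3 ≤ t.2.1 ∧ 2 * t.1 < t.2.2 ∧
      t.2.1 * (t.1 - 2) * t.2.2 = 2 * t.1 * (t.2.2 - χ)}.Finite := by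
  refine (equivelar_map_triples_finite_general χ hχ.ne).subset ?_
  exact fun _ ⟨hp, hq, _, h⟩ ↦ ⟨by lia, by lia, by lia, by lia, h⟩
end
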